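/- arXiv:1906.00154 — 7 statements merged into one kernel-verified Lean document; each statement's English description precedes it below -/
import Mathlib

section
/- For any two regular dominant real weights λ = (λ_1 < λ_2 < ... < λ_n) and μ = (μ_1 < μ_2 < ... < μ_n) in ℝ^n, the Gelfand–Zetlin polytopes Δ_λ and Δ_μ are normally equivalent, i.e., they have the same normal fan: for all u, v ∈ ℝ^N one has F_{Δ_λ}(u) = F_{Δ_λ}(v) if and only if F_{Δ_μ}(u) = F_{Δ_μ}(v). -/
/-- Index set for Gelfand–Zetlin arrays: pairs `(i, j)` with `1 ≤ i`, `1 ≤ j`,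
`i + j ≤ n` (row `i`, column `j`, so `1 ≤ i ≤ n-1` and `1 ≤ j ≤ n-i`). -/
abbrev GZIdx (n : ℕ) :=
  {p : Fin (n + 1) × Fin (n + 1) // 1 ≤ p.1.val ∧ 1 ≤ p.2.val ∧ p.1.val + p.2.val ≤ n}

/-- Constructor for elements of `GZIdx n`. -/
def gzIdx (n i j : ℕ) (hi : 1 ≤ i) (hj : 1 ≤ j) (hij : i + j ≤ n) : GZIdx n :=
  ⟨(⟨i, by omega⟩, ⟨j, by omega⟩), ⟨hi, hj, hij⟩⟩

/-- The Gelfand–Zetlin polytope `Δ_λ ⊆ ℝ^N` of a weight `λ = (λ_1, …, λ_n)`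
(`lam` is 0-indexed, so `λ_j = lam ⟨j-1⟩`): the set of arrays `(x_{i,j})`
with `λ_j ≤ x_{1,j} ≤ λ_{j+1}` for `1 ≤ j ≤ n-1` and
`x_{i-1,j} ≤ x_{i,j} ≤ x_{i-1,j+1}` for `2 ≤ i`, `1 ≤ j`, `i + j ≤ n`. -/
def gzPolytope (n : ℕ) (lam : Fin n → ℝ) : Set (EuclideanSpace ℝ (GZIdx n)) :=
  {x | (∀ (j : ℕ) (h1 : 1 ≤ j) (h2 : j ≤ n - 1),
          lam ⟨j - 1, by omega⟩ ≤ x (gzIdx n 1 j (by omega) h1 (by omega)) ∧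
          x (gzIdx n 1 j (by omega) h1 (by omega)) ≤ lam ⟨j, by omega⟩) ∧
       (∀ (i j : ℕ) (hi : 2 ≤ i) (hj : 1 ≤ j) (hij : i + j ≤ n),
          x (gzIdx n (i - 1) j (by omega) hj (by omega)) ≤ x (gzIdx n i j (by omega) hj hij) ∧
          x (gzIdx n i j (by omega) hj hij) ≤
            x (gzIdx n (i - 1) (j + 1) (by omega) (by omega) (by omega)))}

/-- The face of a set `P` in direction `u`: the points of `P` where the linear
functional `⟨u, ·⟩` attains its maximum over `P`. -/
def faceIn {ι : Type*} [Fintype ι] (P : Set (EuclideanSpace ℝ ι))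
    (u : EuclideanSpace ℝ ι) : Set (EuclideanSpace ℝ ι) :=
  {x | x ∈ P ∧ ∀ y ∈ P, (inner ℝ u y : ℝ) ≤ (inner ℝ u x : ℝ)}

/-!
A Gelfand–Zetlin polytope is a marked order polytope: its defining inequalities compare two
coordinates, or a coordinate with an entry of the weight. Whether a point `x` of such a polytope
lies on the face in direction `u` depends only on which of these inequalities are equalities
at `x`, because they determine the cone of feasible directions at `x`.

If two weights are ordered in the same way, the order isomorphism between their finite sets of
entries extends to the coordinates of any point `y` of one polytope by back-and-forth. This gives
a point `x` of the other polytope satisfying the same equalities, so `x` and `y` lie on faces in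
the same directions.
-/

open Filter Topology

theorem cmp_eq_cmp_of_le_iff_le {α β : Type*} [LinearOrder α] [LinearOrder β] {a a' : α}
    {b b' : β} (h : a ≤ a' ↔ b ≤ b') (h' : a' ≤ a ↔ b' ≤ b) : cmp a a' = cmp b b' := by
  simp only [cmp, cmpUsing, ← not_le, h, h']

theorem exists_extension_le_iff_le {α β κ ι : Type*} [LinearOrder α] [LinearOrder β]
    [DenselyOrdered β] [NoMinOrder β] [NoMaxOrder β] [Nonempty β] [Finite κ] [Countable ι]
    {a : κ → α} {b : κ → β} (hab : ∀ k l, a k ≤ a l ↔ b k ≤ b l) (y : ι → α) :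
    ∃ z : ι → β, ∀ s t : κ ⊕ ι,
      Sum.elim a y s ≤ Sum.elim a y t ↔ Sum.elim b z s ≤ Sum.elim b z t := by
  classical
  have := Fintype.ofFinite κ
  have := Encodable.ofCountable ι
  let p : Order.PartialIso α β := ⟨Finset.univ.image fun k => (a k, b k), by
    simpa only [Finset.forall_mem_image, Finset.mem_univ, true_implies] using
      fun k l => cmp_eq_cmp_of_le_iff_le (hab k l) (hab l k)⟩
  let 𝒟 (i : ι) := Order.PartialIso.definedAtLeft β (y i)
  let I := Order.idealOfCofinals p 𝒟
  have defined_at (i : ι) : ∃ c, ∃ f ∈ I, (y i, c) ∈ f.val :=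
    let ⟨f, ⟨c, hc⟩, hf⟩ := Order.cofinal_meets_idealOfCofinals p 𝒟 i
    ⟨c, f, hf, hc⟩
  choose z hz using defined_at
  have graph_mem : ∀ s : κ ⊕ ι, ∃ f ∈ I, (Sum.elim a y s, Sum.elim b z s) ∈ f.val
    | .inl k => ⟨p, Order.mem_idealOfCofinals p 𝒟,
        Finset.mem_image_of_mem _ (Finset.mem_univ k)⟩
    | .inr i => hz i
  refine ⟨z, fun s t => ?_⟩
  obtain ⟨f, hf, hs⟩ := graph_mem s
  obtain ⟨g, hg, ht⟩ := graph_mem t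
  obtain ⟨m, -, hfm, hgm⟩ := I.directed f hf g hg
  exact le_iff_le_of_cmp_eq_cmp (m.prop _ (hfm hs) _ (hgm ht))

theorem eventually_add_mul_le_add_mul {p p' d d' : ℝ} (hp : p ≤ p') (hd : p = p' → d ≤ d') :
    ∀ᶠ ε in 𝓝[>] (0 : ℝ), p + ε * d ≤ p' + ε * d' := by
  rcases hp.eq_or_lt with heq | hlt
  · filter_upwards [self_mem_nhdsWithin] with ε (hε : 0 < ε)
    gcongr
    exact hd heq
  · have tendsto_line (q e : ℝ) : Tendsto (fun ε => q + ε * e) (𝓝[>] 0) (𝓝 q) :=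
      tendsto_nhdsWithin_of_tendsto_nhds <| Continuous.tendsto' (by fun_prop) _ _ (by simp)
    exact ((tendsto_line p d).eventually_lt (tendsto_line p' d') hlt).mono fun _ => le_of_lt

theorem mem_faceIn_iff_forall_inner_nonpos {ι : Type*} [Fintype ι]
    {P C : Set (EuclideanSpace ℝ ι)} {x : EuclideanSpace ℝ ι} (hx : x ∈ P)
    (sub_mem : ∀ y ∈ P, y - x ∈ C) (add_smul_mem : ∀ d ∈ C, ∃ ε > (0 : ℝ), x + ε • d ∈ P)
    (u : EuclideanSpace ℝ ι) : x ∈ faceIn P u ↔ ∀ d ∈ C, inner ℝ u d ≤ 0 := by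
  refine ⟨fun ⟨_, hmax⟩ d hd => ?_, fun h => ⟨hx, fun y hy => ?_⟩⟩
  · obtain ⟨ε, hε, hmem⟩ := add_smul_mem d hd
    have hle := hmax _ hmem
    rw [inner_add_right, inner_smul_right, add_le_iff_nonpos_right] at hle
    exact nonpos_of_mul_nonpos_right hle hε
  · simpa only [inner_sub_right, sub_nonpos] using h _ (sub_mem y hy)

section MarkedOrderPolytope

variable {κ ι : Type*} {R : κ ⊕ ι → κ ⊕ ι → Prop} {lam mu : κ → ℝ} {x y d : EuclideanSpace ℝ ι}

/-- The marked order polytope of a relation `R` on marked elements `κ` and unmarked elements `ι`: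
the labellings of `ι` which, together with the prescribed labels `lam` on `κ`, are monotone
along `R`. The relation need not be transitive, so it can be taken to consist of the covering
relations of a poset. -/
def markedOrderPolytope (R : κ ⊕ ι → κ ⊕ ι → Prop) (lam : κ → ℝ) : Set (EuclideanSpace ℝ ι) :=
  {x | ∀ s t, R s t → Sum.elim lam x s ≤ Sum.elim lam x t}

/-- The cone of feasible directions of `markedOrderPolytope R lam` at a point `x` of it, cut out by
the inequalities that are equalities at `x`. Marked elements do not move, hence the label `0`. -/
def feasibleDirections (R : κ ⊕ ι → κ ⊕ ι → Prop) (lam : κ → ℝ) (x : EuclideanSpace ℝ ι) :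
    Set (EuclideanSpace ℝ ι) :=
  {d | ∀ s t, R s t → Sum.elim lam x s = Sum.elim lam x t →
    Sum.elim (0 : κ → ℝ) d s ≤ Sum.elim (0 : κ → ℝ) d t}

theorem sumElim_sub (lam : κ → ℝ) (s : κ ⊕ ι) :
    Sum.elim (0 : κ → ℝ) (y - x).ofLp s = Sum.elim lam y s - Sum.elim lam x s := by
  cases s <;> simp

theorem sumElim_add_smul (ε : ℝ) (s : κ ⊕ ι) :
    Sum.elim lam (x + ε • d).ofLp s = Sum.elim lam x s + ε * Sum.elim (0 : κ → ℝ) d s := by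
  cases s <;> simp

theorem sub_mem_feasibleDirections (hy : y ∈ markedOrderPolytope R lam) :
    y - x ∈ feasibleDirections R lam x := by
  intro s t hst heq
  rw [sumElim_sub lam, sumElim_sub lam, heq]
  exact sub_le_sub_right (hy s t hst) _

theorem exists_add_smul_mem_markedOrderPolytope [Finite κ] [Finite ι]
    (hx : x ∈ markedOrderPolytope R lam) (hd : d ∈ feasibleDirections R lam x) :
    ∃ ε > (0 : ℝ), x + ε • d ∈ markedOrderPolytope R lam := by
  have eventually_mem : ∀ᶠ ε in 𝓝[>] (0 : ℝ), x + ε • d ∈ markedOrderPolytope R lam := by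
    simp only [markedOrderPolytope, Set.mem_ofPred_eq, sumElim_add_smul, eventually_all]
    exact fun s t hst => eventually_add_mul_le_add_mul (hx s t hst) (hd s t hst)
  exact (eventually_mem_nhdsWithin.and eventually_mem).exists

theorem mem_faceIn_markedOrderPolytope_iff [Finite κ] [Fintype ι]
    (hx : x ∈ markedOrderPolytope R lam) (u : EuclideanSpace ℝ ι) :
    x ∈ faceIn (markedOrderPolytope R lam) u ↔
      ∀ d ∈ feasibleDirections R lam x, inner ℝ u d ≤ 0 :=
  mem_faceIn_iff_forall_inner_nonpos hx (fun _ => sub_mem_feasibleDirections)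
    (fun _ => exists_add_smul_mem_markedOrderPolytope hx) u

theorem mem_markedOrderPolytope_iff_of_le_iff_le
    (h : ∀ s t, Sum.elim lam x s ≤ Sum.elim lam x t ↔ Sum.elim mu y s ≤ Sum.elim mu y t) :
    x ∈ markedOrderPolytope R lam ↔ y ∈ markedOrderPolytope R mu := by
  simp only [markedOrderPolytope, Set.mem_ofPred_eq, h]

theorem feasibleDirections_eq_of_le_iff_le
    (h : ∀ s t, Sum.elim lam x s ≤ Sum.elim lam x t ↔ Sum.elim mu y s ≤ Sum.elim mu y t) :
    feasibleDirections R lam x = feasibleDirections R mu y := by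
  simp only [feasibleDirections, le_antisymm_iff, h]

theorem mem_faceIn_markedOrderPolytope_iff_of_le_iff_le [Finite κ] [Fintype ι]
    (h : ∀ s t, Sum.elim lam x s ≤ Sum.elim lam x t ↔ Sum.elim mu y s ≤ Sum.elim mu y t)
    (u : EuclideanSpace ℝ ι) :
    x ∈ faceIn (markedOrderPolytope R lam) u ↔ y ∈ faceIn (markedOrderPolytope R mu) u := by
  have hmem : x ∈ markedOrderPolytope R lam ↔ y ∈ markedOrderPolytope R mu :=
    mem_markedOrderPolytope_iff_of_le_iff_le h
  by_cases hx : x ∈ markedOrderPolytope R lam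
  · rw [mem_faceIn_markedOrderPolytope_iff hx, mem_faceIn_markedOrderPolytope_iff (hmem.1 hx),
      feasibleDirections_eq_of_le_iff_le h]
  · exact iff_of_false (fun hface => hx hface.1) fun hface => hx (hmem.2 hface.1)

theorem faceIn_markedOrderPolytope_subset_of_subset [Finite κ] [Fintype ι]
    (h : ∀ i j, lam i ≤ lam j ↔ mu i ≤ mu j) {u v : EuclideanSpace ℝ ι}
    (hsub : faceIn (markedOrderPolytope R lam) u ⊆ faceIn (markedOrderPolytope R lam) v) :
    faceIn (markedOrderPolytope R mu) u ⊆ faceIn (markedOrderPolytope R mu) v := by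
  intro y hy
  obtain ⟨z, hz⟩ := exists_extension_le_iff_le (fun i j => (h i j).symm) y.ofLp
  have mem_face_iff (w : EuclideanSpace ℝ ι) :
      y ∈ faceIn (markedOrderPolytope R mu) w ↔
        WithLp.toLp 2 z ∈ faceIn (markedOrderPolytope R lam) w :=
    mem_faceIn_markedOrderPolytope_iff_of_le_iff_le hz w
  exact (mem_face_iff v).2 (hsub ((mem_face_iff u).1 hy))

theorem faceIn_markedOrderPolytope_eq_iff [Finite κ] [Fintype ι]
    (h : ∀ i j, lam i ≤ lam j ↔ mu i ≤ mu j) (u v : EuclideanSpace ℝ ι) :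
    faceIn (markedOrderPolytope R lam) u = faceIn (markedOrderPolytope R lam) v ↔
      faceIn (markedOrderPolytope R mu) u = faceIn (markedOrderPolytope R mu) v := by
  have subset_iff (u v : EuclideanSpace ℝ ι) :
      faceIn (markedOrderPolytope R lam) u ⊆ faceIn (markedOrderPolytope R lam) v ↔
        faceIn (markedOrderPolytope R mu) u ⊆ faceIn (markedOrderPolytope R mu) v :=
    ⟨faceIn_markedOrderPolytope_subset_of_subset h,
      faceIn_markedOrderPolytope_subset_of_subset fun i j => (h i j).symm⟩
  simp only [Set.Subset.antisymm_iff, subset_iff]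

end MarkedOrderPolytope

/-- The interlacing relations of a Gelfand–Zetlin array whose top row is a weight: `GZRel n s t`
says that the entry at `s` is required to be at most the entry at `t`. As in `gzPolytope`, the
entries of the weight are indexed from `0` and those of the array from `1`. -/
inductive GZRel (n : ℕ) : Fin n ⊕ GZIdx n → Fin n ⊕ GZIdx n → Prop
  | weight_le_row_one (j : ℕ) (h1 : 1 ≤ j) (h2 : j ≤ n - 1) :
      GZRel n (.inl ⟨j - 1, by omega⟩) (.inr (gzIdx n 1 j (by omega) h1 (by omega)))
  | row_one_le_weight (j : ℕ) (h1 : 1 ≤ j) (h2 : j ≤ n - 1) :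
      GZRel n (.inr (gzIdx n 1 j (by omega) h1 (by omega))) (.inl ⟨j, by omega⟩)
  | prev_row_le (i j : ℕ) (hi : 2 ≤ i) (hj : 1 ≤ j) (hij : i + j ≤ n) :
      GZRel n (.inr (gzIdx n (i - 1) j (by omega) hj (by omega)))
        (.inr (gzIdx n i j (by omega) hj hij))
  | le_prev_row (i j : ℕ) (hi : 2 ≤ i) (hj : 1 ≤ j) (hij : i + j ≤ n) :
      GZRel n (.inr (gzIdx n i j (by omega) hj hij))
        (.inr (gzIdx n (i - 1) (j + 1) (by omega) (by omega) (by omega)))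

theorem gzPolytope_eq_markedOrderPolytope (n : ℕ) (lam : Fin n → ℝ) :
    gzPolytope n lam = markedOrderPolytope (GZRel n) lam := by
  ext x
  constructor
  · rintro ⟨row_one, next_row⟩ s t hst
    cases hst with
    | weight_le_row_one j h1 h2 => exact (row_one j h1 h2).1
    | row_one_le_weight j h1 h2 => exact (row_one j h1 h2).2
    | prev_row_le i j hi hj hij => exact (next_row i j hi hj hij).1
    | le_prev_row i j hi hj hij => exact (next_row i j hi hj hij).2
  · intro hx
    exact ⟨fun j h1 h2 =>
        ⟨hx _ _ (.weight_le_row_one j h1 h2), hx _ _ (.row_one_le_weight j h1 h2)⟩,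
      fun i j hi hj hij =>
        ⟨hx _ _ (.prev_row_le i j hi hj hij), hx _ _ (.le_prev_row i j hi hj hij)⟩⟩

theorem gz_polytopes_normally_equivalent_general {n : ℕ} {lam mu : Fin n → ℝ}
    (h : ∀ i j, lam i ≤ lam j ↔ mu i ≤ mu j) (u v : EuclideanSpace ℝ (GZIdx n)) :
    faceIn (gzPolytope n lam) u = faceIn (gzPolytope n lam) v ↔
      faceIn (gzPolytope n mu) u = faceIn (gzPolytope n mu) v := by
  simp only [gzPolytope_eq_markedOrderPolytope]
  exact faceIn_markedOrderPolytope_eq_iff h u v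

/-- For any two regular dominant real weights `λ, μ`, the Gelfand–Zetlin polytopes
`Δ_λ` and `Δ_μ` are normally equivalent (have the same normal fan). -/
theorem gz_polytopes_normally_equivalent (n : ℕ) (hn : 2 ≤ n)
    (lam mu : Fin n → ℝ) (hlam : StrictMono lam) (hmu : StrictMono mu) :
    ∀ u v : EuclideanSpace ℝ (GZIdx n),
      faceIn (gzPolytope n lam) u = faceIn (gzPolytope n lam) v ↔
      faceIn (gzPolytope n mu) u = faceIn (gzPolytope n mu) v := by
  exact gz_polytopes_normally_equivalent_general fun _ _ => hlam.le_iff_le.trans hmu.le_iff_le.symm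
end

section
/- Let P ⊂ ℝ^N (N = n(n-1)/2) be a polytope (convex hull of a nonempty finite set) that is normally equivalent to the Gelfand–Zetlin polytope Δ_μ of the regular dominant weight μ = (1, 2, ..., n), i.e., for all u, v ∈ ℝ^N: F_P(u) = F_P(v) ⟺ F_{Δ_μ}(u) = F_{Δ_μ}(v). Then there exist a dominant λ = (λ_1 ≤ ... ≤ λ_n) ∈ ℝ^n and c ∈ ℝ^N such that P = c + Δ_λ (pointwise translation). -/
/-!
If the normal fan of `D` refines that of `P`, vectors with a common face on `D` have a common face
on `P`. Hence `P` is cut out by the facet normals of `D`, with the values of its support function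
as right-hand sides, and the support function is additive along vectors sharing a face of `D`.

For a Gelfand–Zetlin polytope, put the weight `λ` into row `0` of the array. Each facet normal is
then a difference of two neighbouring entries, and the four normals around a diamond
`(i+1, j), (i, j+1), (i+1, j+1), (i+2, j)` share a face, on which these four entries agree.
Additivity says that the support numbers of `P` sum to the same value along both sides of every
diamond, so they are the differences of a potential `C`. Row `0` of `C` is minus the weight and the
other rows form the translation vector.
-/

section Faces

variable {ι κ : Type*} [Fintype ι] {D P : Set (EuclideanSpace ℝ ι)} {u v w z : EuclideanSpace ℝ ι}

lemma faceIn_nonempty (hPcompact : IsCompact P) (hPne : P.Nonempty) (u : EuclideanSpace ℝ ι) :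
    (faceIn P u).Nonempty := by
  obtain ⟨x, hx, hmax⟩ := hPcompact.exists_isMaxOn hPne
    (f := fun y => (inner ℝ u y : ℝ)) (by fun_prop)
  exact ⟨x, hx, fun y hy => hmax hy⟩

lemma faceIn_zero : faceIn P 0 = P := by
  ext x
  simp [faceIn]

lemma faceIn_smul {t : ℝ} (ht : 0 < t) : faceIn P (t • u) = faceIn P u := by
  ext x
  simp [faceIn, real_inner_smul_left, ht]

lemma faceIn_add (hu : z ∈ faceIn P u) (hv : z ∈ faceIn P v) :
    faceIn P (u + v) = faceIn P u ∩ faceIn P v := by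
  ext x
  constructor
  · rintro ⟨hx, hmax⟩
    have hle : inner ℝ u z + inner ℝ v z ≤ inner ℝ u x + inner ℝ v x := by
      simpa only [inner_add_left] using hmax z hu.1
    exact ⟨⟨hx, fun y hy => by linarith [hu.2 y hy, hv.2 x hx]⟩,
      ⟨hx, fun y hy => by linarith [hv.2 y hy, hu.2 x hx]⟩⟩
  · rintro ⟨hxu, hxv⟩
    refine ⟨hxu.1, fun y hy => ?_⟩
    rw [inner_add_left, inner_add_left]
    exact add_le_add (hxu.2 y hy) (hxv.2 y hy)

lemma faceIn_sum (T : Finset κ) (a : κ → EuclideanSpace ℝ ι) (hzP : z ∈ P)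
    (hz : ∀ k ∈ T, z ∈ faceIn P (a k)) :
    faceIn P (∑ k ∈ T, a k) = {x ∈ P | ∀ k ∈ T, x ∈ faceIn P (a k)} := by
  induction T using Finset.cons_induction with
  | empty => simp [faceIn_zero]
  | cons k T hk ih =>
    rw [Finset.forall_mem_cons] at hz
    have hT := ih hz.2
    have hzT : z ∈ faceIn P (∑ k ∈ T, a k) := by
      rw [hT]
      exact ⟨hzP, hz.2⟩
    rw [Finset.sum_cons, faceIn_add hz.1 hzT, hT]
    ext x
    simp only [Set.mem_inter_iff, Set.mem_ofPred_eq, Finset.forall_mem_cons]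
    tauto

/-- The support function `u ↦ max_{y ∈ P} ⟨u, y⟩` of `P`. It takes the junk value `0` in directions
in which `P` is unbounded, and everywhere if `P` is empty. -/
noncomputable def supportFun (P : Set (EuclideanSpace ℝ ι)) (u : EuclideanSpace ℝ ι) : ℝ :=
  sSup ((fun y => inner ℝ u y) '' P)

lemma inner_eq_supportFun (hz : z ∈ faceIn P u) : inner ℝ u z = supportFun P u := by
  have hmax : IsGreatest ((fun y => inner ℝ u y) '' P) (inner ℝ u z) :=
    ⟨Set.mem_image_of_mem _ hz.1, Set.forall_mem_image.2 hz.2⟩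
  exact hmax.csSup_eq.symm

lemma inner_le_supportFun (hPcompact : IsCompact P) (hz : z ∈ P) (u : EuclideanSpace ℝ ι) :
    inner ℝ u z ≤ supportFun P u := by
  obtain ⟨x, hx⟩ := faceIn_nonempty hPcompact ⟨z, hz⟩ u
  exact inner_eq_supportFun hx ▸ hx.2 z hz

/-- The normal fan of `D` refines the normal fan of `P`: vectors in the relative interior of the
same cone of the first lie in the relative interior of the same cone of the second. -/
def NormalFanRefines (D P : Set (EuclideanSpace ℝ ι)) : Prop :=
  ∀ u v, faceIn D u = faceIn D v → faceIn P u = faceIn P v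

lemma NormalFanRefines.faceIn_subset (href : NormalFanRefines D P) (hne : (faceIn D u).Nonempty)
    (hsub : faceIn D u ⊆ faceIn D w) : faceIn P u ⊆ faceIn P w := by
  have hface (t : ℝ) (ht : 0 < t) : faceIn P (t • u + w) = faceIn P u := by
    obtain ⟨z, hz⟩ := hne
    apply href
    rw [faceIn_add (by rwa [faceIn_smul ht]) (hsub hz), faceIn_smul ht,
      Set.inter_eq_left.2 hsub]
  intro x hx
  refine ⟨hx.1, fun y hy => ?_⟩
  have hle (t : ℝ) (ht : 0 < t) : inner ℝ (t • u + w) y ≤ inner ℝ (t • u + w) x :=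
    ((hface t ht).symm ▸ hx : x ∈ faceIn P (t • u + w)).2 y hy
  have hlim (p : EuclideanSpace ℝ ι) :
      Filter.Tendsto (fun t : ℝ => inner ℝ (t • u + w) p) (nhdsWithin 0 (Set.Ioi 0))
        (nhds (inner ℝ w p)) := by
    have hcont : Continuous fun t : ℝ => inner ℝ (t • u + w) p := by fun_prop
    simpa using (hcont.tendsto 0).mono_left nhdsWithin_le_nhds
  exact le_of_tendsto_of_tendsto (hlim y) (hlim x)
    (Filter.eventually_of_mem self_mem_nhdsWithin hle)

lemma NormalFanRefines.exists_forall_mem_faceIn (href : NormalFanRefines D P)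
    (hPcompact : IsCompact P) (hPne : P.Nonempty) (T : Finset κ) (a : κ → EuclideanSpace ℝ ι)
    (hzD : z ∈ D) (hz : ∀ k ∈ T, z ∈ faceIn D (a k)) :
    ∃ x ∈ P, ∀ k ∈ T, x ∈ faceIn P (a k) := by
  have hsum := faceIn_sum T a hzD hz
  obtain ⟨x, hx⟩ := faceIn_nonempty hPcompact hPne (∑ k ∈ T, a k)
  refine ⟨x, hx.1, fun k hk => href.faceIn_subset ?_ ?_ hx⟩
  · exact ⟨z, hsum ▸ ⟨hzD, hz⟩⟩
  · rw [hsum]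
    exact fun y hy => hy.2 k hk

variable {a : κ → EuclideanSpace ℝ ι} {b : κ → ℝ}

lemma inner_nonpos_of_mem_faceIn [Finite κ] (hD : ∀ x, x ∈ D ↔ ∀ k, inner ℝ (a k) x ≤ b k)
    (hz : z ∈ faceIn D u) {d : EuclideanSpace ℝ ι}
    (hd : ∀ k, inner ℝ (a k) z = b k → inner ℝ (a k) d ≤ 0) : inner ℝ u d ≤ 0 := by
  have hfeasible : ∀ᶠ t : ℝ in nhdsWithin 0 (Set.Ioi 0), z + t • d ∈ D := by
    simp only [hD, Filter.eventually_all]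
    intro k
    rcases ((hD z).1 hz.1 k).eq_or_lt with hactive | hslack
    · filter_upwards [self_mem_nhdsWithin] with t ht
      rw [inner_add_right, real_inner_smul_right, hactive]
      linarith [mul_nonpos_of_nonneg_of_nonpos (le_of_lt ht) (hd k hactive)]
    · have hcont : Continuous fun t : ℝ => inner ℝ (a k) (z + t • d) := by fun_prop
      filter_upwards [nhdsWithin_le_nhds
        (hcont.continuousAt.eventually_lt continuousAt_const (by simpa using hslack))] with t ht
      exact ht.le
  obtain ⟨t, hmem, ht⟩ := (hfeasible.and self_mem_nhdsWithin).exists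
  have hle := hz.2 _ hmem
  rw [inner_add_right, real_inner_smul_right, add_le_iff_nonpos_right] at hle
  exact nonpos_of_mul_nonpos_right hle ht

lemma exists_inner_lt_of_notMem (hPclosed : IsClosed P) (hPconvex : Convex ℝ P) (hz : z ∉ P) :
    ∃ u, ∀ y ∈ P, inner ℝ u y < (inner ℝ u z : ℝ) := by
  obtain ⟨f, s, hfP, hfz⟩ := geometric_hahn_banach_closed_point hPconvex hPclosed hz
  refine ⟨(InnerProductSpace.toDual ℝ _).symm f, fun y hy => ?_⟩
  simpa only [InnerProductSpace.toDual_symm_apply] using (hfP y hy).trans hfz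

theorem NormalFanRefines.mem_iff_inner_le_supportFun [Finite κ] (href : NormalFanRefines D P)
    (hD : ∀ x, x ∈ D ↔ ∀ k, inner ℝ (a k) x ≤ b k) (hDcompact : IsCompact D) (hDne : D.Nonempty)
    (hPcompact : IsCompact P) (hPconvex : Convex ℝ P) (hPne : P.Nonempty)
    (x : EuclideanSpace ℝ ι) : x ∈ P ↔ ∀ k, inner ℝ (a k) x ≤ supportFun P (a k) := by
  refine ⟨fun hx k => inner_le_supportFun hPcompact hx _, fun hx => ?_⟩
  by_contra hxP
  obtain ⟨u, hu⟩ := exists_inner_lt_of_notMem hPcompact.isClosed hPconvex hxP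
  obtain ⟨z, hz⟩ := faceIn_nonempty hDcompact hDne u
  let active : Finset κ := (Set.toFinite {k | inner ℝ (a k) z = b k}).toFinset
  have hactive : ∀ k ∈ active, z ∈ faceIn D (a k) := fun k hk =>
    ⟨hz.1, fun y hy => ((hD y).1 hy k).trans_eq ((Set.Finite.mem_toFinset _).1 hk).symm⟩
  obtain ⟨y, hy, hyface⟩ :=
    href.exists_forall_mem_faceIn hPcompact hPne active a hz.1 hactive
  have hdir : inner ℝ u (x - y) ≤ 0 := inner_nonpos_of_mem_faceIn hD hz fun k hk => by
    have hyk := inner_eq_supportFun (hyface k ((Set.Finite.mem_toFinset _).2 hk))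
    rw [inner_sub_right, hyk]
    exact sub_nonpos.2 (hx k)
  rw [inner_sub_right] at hdir
  linarith [hu y hy]

end Faces

section Potential

lemma exists_potential {A : Type*} [AddCommGroup A] (L U : ℕ → ℕ → A) :
    ∃ C : ℕ → ℕ → A, ∀ i j, (∀ m < i, U m j + L m (j + 1) = L (m + 1) j + U (m + 1) j) →
      L i j = C i j - C (i + 1) j ∧ U i j = C (i + 1) j - C i (j + 1) := by
  let C (i j : ℕ) : A := -∑ m ∈ Finset.range j, (L 0 m + U 0 m) - ∑ m ∈ Finset.range i, L m j
  have hL (i j : ℕ) : L i j = C i j - C (i + 1) j := by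
    simp only [C, Finset.sum_range_succ]
    abel
  refine ⟨C, fun i j hdiamond => ⟨hL i j, ?_⟩⟩
  induction i with
  | zero =>
    simp only [C, Finset.sum_range_succ, Finset.sum_range_zero]
    abel
  | succ i ih =>
    have hU := ih fun m hm => hdiamond m (hm.trans i.lt_succ_self)
    calc U (i + 1) j = U i j + L i (j + 1) - L (i + 1) j := by
          rw [hdiamond i i.lt_succ_self, add_sub_cancel_left]
      _ = C (i + 2) j - C (i + 1) (j + 1) := by
          rw [hU, hL i (j + 1), hL (i + 1) j]
          abel

end Potential

section Arrays

variable {n i j : ℕ} {l : ℕ → ℝ}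

/-- The coordinate vector of position `(i, j)`. It is `0` outside the array, in particular in
row `0`, which holds the fixed weight. -/
noncomputable def gzUnit (n i j : ℕ) : EuclideanSpace ℝ (GZIdx n) :=
  if h : 1 ≤ i ∧ 1 ≤ j ∧ i + j ≤ n then EuclideanSpace.single (gzIdx n i j h.1 h.2.1 h.2.2) 1 else 0

/-- The outer normal of the facet inequality `x_{i,j} ≤ x_{i+1,j}`. -/
noncomputable def lowerNormal (n i j : ℕ) : EuclideanSpace ℝ (GZIdx n) :=
  gzUnit n i j - gzUnit n (i + 1) j

/-- The outer normal of the facet inequality `x_{i+1,j} ≤ x_{i,j+1}`. -/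
noncomputable def upperNormal (n i j : ℕ) : EuclideanSpace ℝ (GZIdx n) :=
  gzUnit n (i + 1) j - gzUnit n i (j + 1)

/-- The array with row `0` equal to the weight `l` and all other rows zero. Weights are indexed
from `1` here, so the polytope of weight `l` is `gzPolytope n fun k => l (k + 1)`. -/
noncomputable def topRow (l : ℕ → ℝ) : ℕ → ℕ → ℝ
  | 0 => l
  | _ + 1 => 0

/-- The entry at `(i, j)` of the array `x` extended by the weight `l` as row `0`. -/
noncomputable def gzEntry (l : ℕ → ℝ) (x : EuclideanSpace ℝ (GZIdx n)) (i j : ℕ) : ℝ :=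
  topRow l i j + inner ℝ (gzUnit n i j) x

/-- The point of `ℝ^N` whose coordinate at `(i, j)` is `C i j`. -/
noncomputable def gzArray (n : ℕ) (C : ℕ → ℕ → ℝ) : EuclideanSpace ℝ (GZIdx n) :=
  WithLp.toLp 2 fun p => C p.1.1 p.1.2

lemma gzUnit_row_zero : gzUnit n 0 j = 0 :=
  dif_neg fun h => absurd h.1 (by norm_num)

lemma inner_gzUnit (x : EuclideanSpace ℝ (GZIdx n)) (hi : 1 ≤ i) (hj : 1 ≤ j) (hij : i + j ≤ n) :
    inner ℝ (gzUnit n i j) x = x (gzIdx n i j hi hj hij) := by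
  rw [gzUnit, dif_pos ⟨hi, hj, hij⟩, EuclideanSpace.inner_single_left, map_one, one_mul]

lemma topRow_zero : topRow l 0 = l :=
  rfl

lemma topRow_succ : topRow l (i + 1) = 0 :=
  rfl

lemma gzEntry_row_zero (x : EuclideanSpace ℝ (GZIdx n)) : gzEntry l x 0 j = l j := by
  rw [gzEntry, topRow_zero, gzUnit_row_zero, inner_zero_left, add_zero]

lemma gzEntry_succ (x : EuclideanSpace ℝ (GZIdx n)) (hj : 1 ≤ j) (hij : i + 1 + j ≤ n) :
    gzEntry l x (i + 1) j = x (gzIdx n (i + 1) j (Nat.le_add_left 1 i) hj hij) := by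
  rw [gzEntry, topRow_succ, inner_gzUnit, Pi.zero_apply, zero_add]

lemma gzEntry_gzArray {C : ℕ → ℕ → ℝ} (hrow : C 0 j = l j) (hj : 1 ≤ j) (hij : i + j ≤ n) :
    gzEntry l (gzArray n C) i j = C i j := by
  rcases i with _ | i
  · rw [gzEntry_row_zero, hrow]
  · rw [gzEntry_succ _ hj hij]
    rfl

lemma gzEntry_neg_sub_gzArray (C : ℕ → ℕ → ℝ) (x : EuclideanSpace ℝ (GZIdx n)) (hj : 1 ≤ j)
    (hij : i + j ≤ n) :
    gzEntry (fun m => -C 0 m) (x - gzArray n C) i j = inner ℝ (gzUnit n i j) x - C i j := by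
  rw [← gzEntry_gzArray (l := C 0) (C := C) rfl hj hij]
  rcases i with _ | i <;>
  simp [gzEntry, gzUnit_row_zero, topRow_zero, topRow_succ, inner_sub_right]

lemma mem_gzPolytope_iff_gzEntry (x : EuclideanSpace ℝ (GZIdx n)) :
    x ∈ gzPolytope n (fun k => l (k + 1)) ↔ ∀ i j, 1 ≤ j → i + 1 + j ≤ n →
      gzEntry l x i j ≤ gzEntry l x (i + 1) j ∧ gzEntry l x (i + 1) j ≤ gzEntry l x i (j + 1) := by
  constructor
  · rintro ⟨hrow, hinner⟩ i j hj hij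
    rw [gzEntry_succ x hj hij]
    rcases i with _ | i
    · simpa only [gzEntry_row_zero, Nat.sub_add_cancel hj] using hrow j hj (by omega)
    · rw [gzEntry_succ x hj (by omega), gzEntry_succ x (by omega) (by omega)]
      exact hinner (i + 2) j (by omega) hj hij
  · intro h
    refine ⟨fun j hj hjn => ?_, fun i j hi hj hij => ?_⟩
    · have hrow := h 0 j hj (by omega)
      rw [gzEntry_succ x hj (by omega), gzEntry_row_zero, gzEntry_row_zero] at hrow
      simpa only [Nat.sub_add_cancel hj] using hrow
    · obtain ⟨i, rfl⟩ := Nat.exists_eq_add_of_le' hi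
      have hinner := h (i + 1) j hj hij
      rwa [gzEntry_succ x hj hij, gzEntry_succ x hj (by omega),
        gzEntry_succ x (by omega) (by omega)] at hinner

lemma inner_lowerNormal (l : ℕ → ℝ) (x : EuclideanSpace ℝ (GZIdx n)) (i j : ℕ) :
    inner ℝ (lowerNormal n i j) x =
      gzEntry l x i j - gzEntry l x (i + 1) j - topRow l i j := by
  rw [gzEntry, gzEntry, lowerNormal, inner_sub_left, topRow_succ, Pi.zero_apply]
  ring

lemma inner_upperNormal (l : ℕ → ℝ) (x : EuclideanSpace ℝ (GZIdx n)) (i j : ℕ) :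
    inner ℝ (upperNormal n i j) x =
      gzEntry l x (i + 1) j - gzEntry l x i (j + 1) + topRow l i (j + 1) := by
  rw [gzEntry, gzEntry, upperNormal, inner_sub_left, topRow_succ, Pi.zero_apply]
  ring

lemma upperNormal_add_lowerNormal (n i j : ℕ) :
    upperNormal n i j + lowerNormal n i (j + 1) =
      lowerNormal n (i + 1) j + upperNormal n (i + 1) j := by
  simp only [lowerNormal, upperNormal]
  abel

lemma mem_gzPolytope_iff_inner_le (x : EuclideanSpace ℝ (GZIdx n)) :
    x ∈ gzPolytope n (fun k => l (k + 1)) ↔ ∀ i j, 1 ≤ j → i + 1 + j ≤ n →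
      inner ℝ (lowerNormal n i j) x ≤ -topRow l i j ∧
      inner ℝ (upperNormal n i j) x ≤ topRow l i (j + 1) := by
  simp only [mem_gzPolytope_iff_gzEntry, inner_lowerNormal l, inner_upperNormal l,
    sub_le_iff_le_add, neg_add_cancel, zero_add, add_le_iff_nonpos_left]

lemma sub_gzArray_mem_gzPolytope_iff (C : ℕ → ℕ → ℝ) (x : EuclideanSpace ℝ (GZIdx n)) :
    x - gzArray n C ∈ gzPolytope n (fun k => -C 0 (k + 1)) ↔ ∀ i j, 1 ≤ j → i + 1 + j ≤ n →
      inner ℝ (lowerNormal n i j) x ≤ C i j - C (i + 1) j ∧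
      inner ℝ (upperNormal n i j) x ≤ C (i + 1) j - C i (j + 1) := by
  rw [mem_gzPolytope_iff_gzEntry (l := fun m => -C 0 m)]
  refine forall₄_congr fun i j hj hij => ?_
  rw [gzEntry_neg_sub_gzArray C x hj (by omega), gzEntry_neg_sub_gzArray C x hj hij,
    gzEntry_neg_sub_gzArray C x (by omega) (by omega), lowerNormal, upperNormal,
    inner_sub_left, inner_sub_left]
  constructor <;> rintro ⟨hlower, hupper⟩ <;> constructor <;> linarith

end Arrays

section GelfandZetlin

lemma exists_monotone_nat_extension {α : Type*} [Preorder α] [Nonempty α] {n : ℕ} {μ : Fin n → α}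
    (hμ : Monotone μ) : ∃ l : ℕ → α, Monotone l ∧ μ = fun k : Fin n => l (k + 1) := by
  rcases n with _ | n
  · exact ⟨fun _ => Classical.arbitrary α, monotone_const, Subsingleton.elim _ _⟩
  · refine ⟨fun m => μ (Fin.clamp (m - 1) n), fun a b hab => hμ ?_, funext fun k => ?_⟩
    · exact Fin.mk_le_mk.2 (min_le_min_right _ (Nat.sub_le_sub_right hab 1))
    · congr 1
      ext
      simp [Fin.clamp, k.is_le]

variable {n i j : ℕ} {l : ℕ → ℝ} {x : EuclideanSpace ℝ (GZIdx n)}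

lemma monotone_of_gzPolytope_nonempty {lam : Fin n → ℝ} (h : (gzPolytope n lam).Nonempty) :
    Monotone lam := by
  obtain ⟨x, hrow, -⟩ := h
  rcases n with _ | n
  · exact Subsingleton.monotone lam
  · refine Fin.monotone_iff_le_succ.2 fun k => ?_
    have hk := hrow (k + 1) (by omega) (by omega)
    exact hk.1.trans hk.2

lemma gzEntry_mem_Icc (hx : x ∈ gzPolytope n (fun k => l (k + 1))) (hj : 1 ≤ j)
    (hij : i + j ≤ n) : gzEntry l x i j ∈ Set.Icc (l j) (l (i + j)) := by
  rw [mem_gzPolytope_iff_gzEntry] at hx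
  induction i generalizing j with
  | zero => simp [gzEntry_row_zero]
  | succ i ih =>
    obtain ⟨hlower, hupper⟩ := hx i j hj hij
    refine ⟨(ih hj (by omega)).1.trans hlower, hupper.trans ?_⟩
    rw [show i + 1 + j = i + (j + 1) by omega]
    exact (ih (by omega) (by omega)).2

lemma isClosed_gzPolytope : IsClosed (gzPolytope n fun k => l (k + 1)) := by
  have hset : gzPolytope n (fun k => l (k + 1)) = {x | ∀ i j, 1 ≤ j → i + 1 + j ≤ n →
      inner ℝ (lowerNormal n i j) x ≤ -topRow l i j ∧
      inner ℝ (upperNormal n i j) x ≤ topRow l i (j + 1)} :=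
    Set.ext mem_gzPolytope_iff_inner_le
  simp only [hset, Set.ofPred_forall, Set.ofPred_and]
  refine isClosed_iInter fun i => isClosed_iInter fun j => isClosed_iInter fun _ =>
    isClosed_iInter fun _ => IsClosed.inter ?_ ?_ <;>
  exact isClosed_le (by fun_prop) continuous_const

lemma isCompact_gzPolytope : IsCompact (gzPolytope n fun k => l (k + 1)) := by
  have hbox : IsCompact (EuclideanSpace.equiv (GZIdx n) ℝ ⁻¹'
      Set.Icc (fun p => l p.1.2) (fun p => l (p.1.1 + p.1.2))) :=
    (EuclideanSpace.equiv (GZIdx n) ℝ).toHomeomorph.isCompact_preimage.2 isCompact_Icc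
  refine hbox.of_isClosed_subset isClosed_gzPolytope fun x hx => ?_
  have hbounds (p : GZIdx n) : x p ∈ Set.Icc (l p.1.2) (l (p.1.1 + p.1.2)) := by
    obtain ⟨⟨⟨_ | i, _⟩, ⟨j, _⟩⟩, hi, hj, hij⟩ := p
    · exact absurd hi (by norm_num)
    · exact gzEntry_succ (l := l) x hj hij ▸ gzEntry_mem_Icc hx hj hij
  exact ⟨fun p => (hbounds p).1, fun p => (hbounds p).2⟩

/-- The Gelfand–Zetlin array of weight `l` with every entry as close to `v` as the bounds
`l j ≤ x_{i,j} ≤ l (i + j)` allow. -/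
noncomputable def gzClamp (n : ℕ) (l : ℕ → ℝ) (v : ℝ) : EuclideanSpace ℝ (GZIdx n) :=
  gzArray n fun i j => max (l j) (min v (l (i + j)))

lemma gzEntry_gzClamp (v : ℝ) (hj : 1 ≤ j) (hij : i + j ≤ n) :
    gzEntry l (gzClamp n l v) i j = max (l j) (min v (l (i + j))) :=
  gzEntry_gzArray (by simp) hj hij

lemma gzClamp_mem_gzPolytope (hl : Monotone l) (v : ℝ) :
    gzClamp n l v ∈ gzPolytope n (fun k => l (k + 1)) := by
  rw [mem_gzPolytope_iff_gzEntry]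
  intro i j hj hij
  rw [gzEntry_gzClamp v hj (by omega), gzEntry_gzClamp v hj hij,
    gzEntry_gzClamp v (by omega) (by omega), show i + (j + 1) = i + 1 + j by omega]
  exact ⟨max_le_max_left _ (min_le_min_left _ (hl (by omega))),
    max_le_max_right _ (hl (Nat.le_succ j))⟩

lemma gzEntry_gzClamp_eq (hl : Monotone l) {m : ℕ} (hj : 1 ≤ j) (hij : i + j ≤ n) (hjm : j ≤ m)
    (hmij : m ≤ i + j) : gzEntry l (gzClamp n l (l m)) i j = l m := by
  rw [gzEntry_gzClamp _ hj hij, min_eq_left (hl hmij), max_eq_right (hl hjm)]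

lemma mem_faceIn_lowerNormal (hx : x ∈ gzPolytope n (fun k => l (k + 1))) (hj : 1 ≤ j)
    (hij : i + 1 + j ≤ n) (heq : gzEntry l x i j = gzEntry l x (i + 1) j) :
    x ∈ faceIn (gzPolytope n fun k => l (k + 1)) (lowerNormal n i j) := by
  refine ⟨hx, fun y hy => ?_⟩
  have hle := ((mem_gzPolytope_iff_gzEntry y).1 hy i j hj hij).1
  rw [inner_lowerNormal l, inner_lowerNormal l]
  linarith

lemma mem_faceIn_upperNormal (hx : x ∈ gzPolytope n (fun k => l (k + 1))) (hj : 1 ≤ j)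
    (hij : i + 1 + j ≤ n) (heq : gzEntry l x (i + 1) j = gzEntry l x i (j + 1)) :
    x ∈ faceIn (gzPolytope n fun k => l (k + 1)) (upperNormal n i j) := by
  refine ⟨hx, fun y hy => ?_⟩
  have hle := ((mem_gzPolytope_iff_gzEntry y).1 hy i j hj hij).2
  rw [inner_upperNormal l, inner_upperNormal l]
  linarith

lemma exists_mem_faceIn_diamond (hl : Monotone l) (hj : 1 ≤ j) (hij : i + 2 + j ≤ n) :
    ∃ x, x ∈ faceIn (gzPolytope n fun k => l (k + 1)) (upperNormal n i j) ∧
      x ∈ faceIn (gzPolytope n fun k => l (k + 1)) (lowerNormal n i (j + 1)) ∧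
      x ∈ faceIn (gzPolytope n fun k => l (k + 1)) (lowerNormal n (i + 1) j) ∧
      x ∈ faceIn (gzPolytope n fun k => l (k + 1)) (upperNormal n (i + 1) j) := by
  have hmem := gzClamp_mem_gzPolytope (n := n) hl (l (j + 1))
  have hentry (row col : ℕ) (h : 1 ≤ col ∧ row + col ≤ n ∧ col ≤ j + 1 ∧ j + 1 ≤ row + col) :
      gzEntry l (gzClamp n l (l (j + 1))) row col = l (j + 1) :=
    gzEntry_gzClamp_eq hl h.1 h.2.1 h.2.2.1 h.2.2.2
  have htop := hentry i (j + 1) (by omega)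
  have hleft := hentry (i + 1) j (by omega)
  have hright := hentry (i + 1) (j + 1) (by omega)
  have hbottom := hentry (i + 2) j (by omega)
  exact ⟨_, mem_faceIn_upperNormal hmem hj (by omega) (hleft.trans htop.symm),
    mem_faceIn_lowerNormal hmem (by omega) (by omega) (htop.trans hright.symm),
    mem_faceIn_lowerNormal hmem hj (by omega) (hleft.trans hbottom.symm),
    mem_faceIn_upperNormal hmem hj (by omega) (hbottom.trans hright.symm)⟩

variable {P : Set (EuclideanSpace ℝ (GZIdx n))}

lemma supportFun_diamond (hl : Monotone l)
    (href : NormalFanRefines (gzPolytope n fun k => l (k + 1)) P) (hPcompact : IsCompact P)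
    (hPne : P.Nonempty) (hj : 1 ≤ j) (hij : i + 2 + j ≤ n) :
    supportFun P (upperNormal n i j) + supportFun P (lowerNormal n i (j + 1)) =
      supportFun P (lowerNormal n (i + 1) j) + supportFun P (upperNormal n (i + 1) j) := by
  obtain ⟨z, hz⟩ := exists_mem_faceIn_diamond hl hj hij
  obtain ⟨x, -, hx⟩ := href.exists_forall_mem_faceIn hPcompact hPne Finset.univ
    ![upperNormal n i j, lowerNormal n i (j + 1), lowerNormal n (i + 1) j, upperNormal n (i + 1) j]
    hz.1.1 (by simpa [Fin.forall_fin_succ] using hz)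
  obtain ⟨htopLeft, htopRight, hbottomLeft, hbottomRight⟩ := by
    simpa [Fin.forall_fin_succ] using hx
  rw [← inner_eq_supportFun htopLeft, ← inner_eq_supportFun htopRight,
    ← inner_eq_supportFun hbottomLeft, ← inner_eq_supportFun hbottomRight,
    ← inner_add_left, ← inner_add_left, upperNormal_add_lowerNormal]

lemma forall_gzIdx_iff {Q : ℕ → ℕ → Prop} :
    (∀ p : GZIdx n, Q (p.1.1 - 1) p.1.2) ↔ ∀ i j, 1 ≤ j → i + 1 + j ≤ n → Q i j := by
  refine ⟨fun h i j hj hij => h (gzIdx n (i + 1) j (Nat.le_add_left 1 i) hj hij), fun h p => ?_⟩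
  have hp := p.2
  exact h _ _ hp.2.1 (by omega)

lemma mem_iff_inner_normal_le_supportFun (hl : Monotone l)
    (href : NormalFanRefines (gzPolytope n fun k => l (k + 1)) P) (hPcompact : IsCompact P)
    (hPconvex : Convex ℝ P) (hPne : P.Nonempty) (x : EuclideanSpace ℝ (GZIdx n)) :
    x ∈ P ↔ ∀ i j, 1 ≤ j → i + 1 + j ≤ n →
      inner ℝ (lowerNormal n i j) x ≤ supportFun P (lowerNormal n i j) ∧
      inner ℝ (upperNormal n i j) x ≤ supportFun P (upperNormal n i j) := by
  rw [href.mem_iff_inner_le_supportFun (κ := GZIdx n ⊕ GZIdx n)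
    (a := Sum.elim (fun p => lowerNormal n (p.1.1 - 1) p.1.2)
      fun p => upperNormal n (p.1.1 - 1) p.1.2)
    (b := Sum.elim (fun p => -topRow l (p.1.1 - 1) p.1.2)
      fun p => topRow l (p.1.1 - 1) (p.1.2 + 1))
    (fun y => ?_) isCompact_gzPolytope ⟨_, gzClamp_mem_gzPolytope hl 0⟩ hPcompact hPconvex hPne]
  · simp only [Sum.forall, Sum.elim_inl, Sum.elim_inr, ← forall_and, ← forall_gzIdx_iff]
  · simp only [mem_gzPolytope_iff_inner_le, Sum.forall, Sum.elim_inl, Sum.elim_inr, ← forall_and,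
      ← forall_gzIdx_iff]

end GelfandZetlin

theorem polytope_with_gz_normal_fan_is_translate_of_gz_general {n : ℕ} {μ : Fin n → ℝ}
    (hμ : Monotone μ) {P : Set (EuclideanSpace ℝ (GZIdx n))} (hPcompact : IsCompact P)
    (hPconvex : Convex ℝ P) (hPne : P.Nonempty) (href : NormalFanRefines (gzPolytope n μ) P) :
    ∃ lam : Fin n → ℝ, Monotone lam ∧ ∃ c : EuclideanSpace ℝ (GZIdx n),
      P = (fun x => c + x) '' gzPolytope n lam := by
  obtain ⟨l, hl, rfl⟩ := exists_monotone_nat_extension hμ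
  obtain ⟨C, hC⟩ := exists_potential (fun i j => supportFun P (lowerNormal n i j))
    (fun i j => supportFun P (upperNormal n i j))
  have hmem (x) : x ∈ P ↔ x - gzArray n C ∈ gzPolytope n (fun k => -C 0 (k + 1)) := by
    rw [mem_iff_inner_normal_le_supportFun hl href hPcompact hPconvex hPne,
      sub_gzArray_mem_gzPolytope_iff]
    refine forall₄_congr fun i j hj hij => ?_
    obtain ⟨hlower, hupper⟩ := hC i j fun m _ =>
      supportFun_diamond hl href hPcompact hPne hj (by omega)
    rw [hlower, hupper]
  obtain ⟨x, hx⟩ := hPne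
  refine ⟨_, monotone_of_gzPolytope_nonempty ⟨_, (hmem x).1 hx⟩, gzArray n C, ?_⟩
  ext y
  rw [hmem, Set.image_add_left, Set.mem_preimage, neg_add_eq_sub]

/-- Any polytope normally equivalent to the Gelfand–Zetlin polytope of the regular
dominant weight `μ = (1, 2, …, n)` is a translate of a Gelfand–Zetlin polytope of
some dominant weight `λ`. -/
theorem polytope_with_gz_normal_fan_is_translate_of_gz (n : ℕ) (hn : 2 ≤ n)
    (P : Set (EuclideanSpace ℝ (GZIdx n)))
    (S : Finset (EuclideanSpace ℝ (GZIdx n))) (hS : S.Nonempty)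
    (hP : P = convexHull ℝ (S : Set (EuclideanSpace ℝ (GZIdx n))))
    (hne : ∀ u v : EuclideanSpace ℝ (GZIdx n),
      faceIn P u = faceIn P v ↔
      faceIn (gzPolytope n (fun i => (i.val + 1 : ℝ))) u =
        faceIn (gzPolytope n (fun i => (i.val + 1 : ℝ))) v) :
    ∃ lam : Fin n → ℝ, Monotone lam ∧ ∃ c : EuclideanSpace ℝ (GZIdx n),
      P = (fun x => c + x) '' gzPolytope n lam := by
  subst hP
  have hμ : Monotone fun i : Fin n => (i.val + 1 : ℝ) := fun i j hij => by simpa using hij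
  exact polytope_with_gz_normal_fan_is_translate_of_gz_general hμ
    (S.finite_toSet.isCompact_convexHull (𝕜 := ℝ)) (convex_convexHull ℝ _)
    (Finset.coe_nonempty.2 hS).convexHull fun u v => (hne u v).2
end

section
/- The assignment λ ↦ Δ_λ is additive with respect to Minkowski sum: for any two dominant weights λ = (λ_1 ≤ ... ≤ λ_n) and μ = (μ_1 ≤ ... ≤ μ_n) in ℤ^n, one has Δ_{λ+μ} = Δ_λ + Δ_μ, where the right-hand side is the Minkowski sum {x + y : x ∈ Δ_λ, y ∈ Δ_μ} of subsets of ℝ^N. -/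
/-!
A point of `Δ_λ` consists of its first row `ν`, which ranges over the box
`[λ_1, λ_2] × ⋯ × [λ_{n-1}, λ_n]`, and of the rows below, which form a point of `Δ_ν`.
The box of `λ + μ` is the Minkowski sum of the boxes of `λ` and `μ`, so a point of `Δ_{λ+μ}`
can be split into a point of `Δ_λ` and a point of `Δ_μ` one row at a time: every row of a point is
again dominant, so the splitting can continue.
-/

section LatticeOrderedGroup

open scoped Pointwise

variable {α : Type*} [AddCommGroup α] [Lattice α] [IsOrderedAddMonoid α] {a b c d : α}

theorem Icc_add_Icc_of_lattice (hab : a ≤ b) (hcd : c ≤ d) :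
    Set.Icc a b + Set.Icc c d = Set.Icc (a + c) (b + d) := by
  refine (Set.Icc_add_Icc_subset a b c d).antisymm fun x ⟨hacx, hxbd⟩ => ?_
  have hax : a ≤ x - c := le_sub_iff_add_le.2 hacx
  have hxb : x - d ≤ b := sub_le_iff_le_add.2 hxbd
  refine ⟨a ⊔ (x - d), ⟨le_sup_left, sup_le hab hxb⟩, x - a ⊔ (x - d), ⟨?_, ?_⟩,
    add_sub_cancel _ _⟩
  · exact le_sub_comm.1 (sup_le hax (sub_le_sub_left hcd x))
  · exact sub_le_comm.1 le_sup_right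

end LatticeOrderedGroup

section Interlacing

variable {α : Type*} [Preorder α] {n : ℕ}

theorem init_le_tail_of_monotone {lam : Fin (n + 1) → α} (hlam : Monotone lam) :
    Fin.init lam ≤ Fin.tail lam :=
  fun j => hlam j.castSucc_lt_succ.le

theorem monotone_of_mem_Icc_init_tail {lam : Fin (n + 1) → α} {nu : Fin n → α}
    (hnu : nu ∈ Set.Icc (Fin.init lam) (Fin.tail lam)) : Monotone nu := by
  cases n with
  | zero => exact Subsingleton.monotone nu
  | succ n =>
    refine Fin.monotone_iff_le_succ.2 fun j => ?_
    calc nu j.castSucc ≤ Fin.tail lam j.castSucc := hnu.2 _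
      _ = Fin.init lam j.succ := rfl
      _ ≤ nu j.succ := hnu.1 _

end Interlacing

section Rows

variable {n : ℕ}

/-- The first row `(x_{1,1}, …, x_{1,n})` of an array of size `n + 1`, as a 0-indexed weight. -/
def gzFirstRow (x : EuclideanSpace ℝ (GZIdx (n + 1))) : Fin n → ℝ :=
  fun j => x (gzIdx (n + 1) 1 (j + 1) le_rfl (by omega) (by omega))

/-- The array of size `n` obtained from one of size `n + 1` by deleting the first row. -/
def gzLowerRows (x : EuclideanSpace ℝ (GZIdx (n + 1))) : EuclideanSpace ℝ (GZIdx n) :=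
  WithLp.toLp 2 fun p =>
    x (gzIdx (n + 1) (p.1.1 + 1) p.1.2 (by omega) p.2.2.1 (by have := p.2.2.2; omega))

/-- The array of size `n + 1` whose first row is `nu` and whose remaining rows are those of `y`. -/
def gzCons (nu : Fin n → ℝ) (y : EuclideanSpace ℝ (GZIdx n)) : EuclideanSpace ℝ (GZIdx (n + 1)) :=
  WithLp.toLp 2 fun p =>
    if h : p.1.1.val = 1 then nu ⟨p.1.2 - 1, by have := p.2; omega⟩
    else y (gzIdx n (p.1.1 - 1) p.1.2 (by have := p.2; omega) p.2.2.1 (by have := p.2; omega))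

theorem gzFirstRow_gzCons (nu : Fin n → ℝ) (y : EuclideanSpace ℝ (GZIdx n)) :
    gzFirstRow (gzCons nu y) = nu :=
  rfl

theorem gzLowerRows_gzCons (nu : Fin n → ℝ) (y : EuclideanSpace ℝ (GZIdx n)) :
    gzLowerRows (gzCons nu y) = y := by
  ext ⟨⟨⟨i, hi⟩, ⟨j, hj⟩⟩, hi_pos, hj_pos, hij⟩
  have hi_ne : i ≠ 0 := Nat.one_le_iff_ne_zero.1 hi_pos
  simp [gzLowerRows, gzCons, gzIdx, hi_ne]

theorem gzCons_gzFirstRow_gzLowerRows (x : EuclideanSpace ℝ (GZIdx (n + 1))) :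
    gzCons (gzFirstRow x) (gzLowerRows x) = x := by
  ext ⟨⟨⟨i, hi⟩, ⟨j, hj⟩⟩, hi_pos, hj_pos, hij⟩
  obtain ⟨i, rfl⟩ := Nat.exists_eq_add_of_le' hi_pos
  obtain ⟨j, rfl⟩ := Nat.exists_eq_add_of_le' hj_pos
  cases i <;> rfl

theorem gzCons_add (nu ka : Fin n → ℝ) (y z : EuclideanSpace ℝ (GZIdx n)) :
    gzCons (nu + ka) (y + z) = gzCons nu y + gzCons ka z := by
  ext p
  by_cases hp : p.1.1.val = 1 <;> simp [gzCons, hp]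

end Rows

section Polytope

open scoped Pointwise

variable {n : ℕ}

theorem mem_gzPolytope_iff {lam : Fin n → ℝ} {x : EuclideanSpace ℝ (GZIdx n)} :
    x ∈ gzPolytope n lam ↔
      (∀ (j : ℕ) (h : j + 1 < n),
        x (gzIdx n 1 (j + 1) le_rfl (by omega) (by omega)) ∈
          Set.Icc (lam ⟨j, by omega⟩) (lam ⟨j + 1, h⟩)) ∧
      ∀ (i j : ℕ) (h : i + j + 2 < n),
        x (gzIdx n (i + 2) (j + 1) (by omega) (by omega) (by omega)) ∈
          Set.Icc (x (gzIdx n (i + 1) (j + 1) (by omega) (by omega) (by omega)))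
            (x (gzIdx n (i + 1) (j + 2) (by omega) (by omega) (by omega))) := by
  constructor
  · rintro ⟨hfirst, hlower⟩
    exact ⟨fun j h => hfirst (j + 1) (by omega) (by omega),
      fun i j h => hlower (i + 2) (j + 1) (by omega) (by omega) (by omega)⟩
  · rintro ⟨hfirst, hlower⟩
    refine ⟨fun j hj hjn => ?_, fun i j hi hj hij => ?_⟩
    · obtain ⟨j, rfl⟩ := Nat.exists_eq_add_of_le' hj
      exact hfirst j (by omega)
    · obtain ⟨i, rfl⟩ := Nat.exists_eq_add_of_le' hi
      obtain ⟨j, rfl⟩ := Nat.exists_eq_add_of_le' hj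
      exact hlower i j (by omega)

theorem mem_gzPolytope_succ_iff {lam : Fin (n + 1) → ℝ} {x : EuclideanSpace ℝ (GZIdx (n + 1))} :
    x ∈ gzPolytope (n + 1) lam ↔
      gzFirstRow x ∈ Set.Icc (Fin.init lam) (Fin.tail lam) ∧
        gzLowerRows x ∈ gzPolytope n (gzFirstRow x) := by
  rw [mem_gzPolytope_iff, mem_gzPolytope_iff]
  constructor
  · rintro ⟨hfirst, hlower⟩
    exact ⟨⟨fun j => (hfirst j (by omega)).1, fun j => (hfirst j (by omega)).2⟩,
      fun j h => hlower 0 j (by omega), fun i j h => hlower (i + 1) j (by omega)⟩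
  · rintro ⟨hbox, hsecond, hlower⟩
    refine ⟨fun j h => ⟨hbox.1 ⟨j, by omega⟩, hbox.2 ⟨j, by omega⟩⟩, fun i j h => ?_⟩
    cases i with
    | zero => exact hsecond j (by omega)
    | succ i => exact hlower i j (by omega)

theorem gzCons_mem_gzPolytope_iff {lam : Fin (n + 1) → ℝ} {nu : Fin n → ℝ}
    {y : EuclideanSpace ℝ (GZIdx n)} :
    gzCons nu y ∈ gzPolytope (n + 1) lam ↔
      nu ∈ Set.Icc (Fin.init lam) (Fin.tail lam) ∧ y ∈ gzPolytope n nu := by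
  rw [mem_gzPolytope_succ_iff, gzFirstRow_gzCons, gzLowerRows_gzCons]

theorem gzPolytope_add_subset (lam mu : Fin n → ℝ) :
    gzPolytope n lam + gzPolytope n mu ⊆ gzPolytope n (lam + mu) := by
  rintro _ ⟨y, ⟨hy_first, hy_lower⟩, z, ⟨hz_first, hz_lower⟩, rfl⟩
  exact ⟨fun j hj hjn => ⟨add_le_add (hy_first j hj hjn).1 (hz_first j hj hjn).1,
      add_le_add (hy_first j hj hjn).2 (hz_first j hj hjn).2⟩,
    fun i j hi hj hij => ⟨add_le_add (hy_lower i j hi hj hij).1 (hz_lower i j hi hj hij).1,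
      add_le_add (hy_lower i j hi hj hij).2 (hz_lower i j hi hj hij).2⟩⟩

theorem gzPolytope_zero (lam : Fin 0 → ℝ) : gzPolytope 0 lam = Set.univ :=
  Set.eq_univ_of_forall fun _ => mem_gzPolytope_iff.2
    ⟨fun _ h => absurd h (Nat.not_lt_zero _), fun _ _ h => absurd h (Nat.not_lt_zero _)⟩

theorem gzPolytope_add_general {lam mu : Fin n → ℝ} (hlam : Monotone lam) (hmu : Monotone mu) :
    gzPolytope n (lam + mu) = gzPolytope n lam + gzPolytope n mu := by
  refine Set.Subset.antisymm ?_ (gzPolytope_add_subset lam mu)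
  induction n with
  | zero => simp only [gzPolytope_zero, Set.univ_add_univ, subset_rfl]
  | succ n ih =>
    intro x hx
    obtain ⟨hbox, hlower⟩ := mem_gzPolytope_succ_iff.1 hx
    have hbox_add : gzFirstRow x ∈
        Set.Icc (Fin.init lam) (Fin.tail lam) + Set.Icc (Fin.init mu) (Fin.tail mu) := by
      rw [Icc_add_Icc_of_lattice (init_le_tail_of_monotone hlam) (init_le_tail_of_monotone hmu)]
      exact hbox
    obtain ⟨nu, hnu, ka, hka, hrow : nu + ka = gzFirstRow x⟩ := hbox_add
    rw [← hrow] at hlower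
    obtain ⟨y, hy, z, hz, hyz : y + z = gzLowerRows x⟩ :=
      ih (monotone_of_mem_Icc_init_tail hnu) (monotone_of_mem_Icc_init_tail hka) hlower
    refine ⟨gzCons nu y, gzCons_mem_gzPolytope_iff.2 ⟨hnu, hy⟩,
      gzCons ka z, gzCons_mem_gzPolytope_iff.2 ⟨hka, hz⟩, ?_⟩
    calc gzCons nu y + gzCons ka z = gzCons (nu + ka) (y + z) := (gzCons_add nu ka y z).symm
      _ = gzCons (gzFirstRow x) (gzLowerRows x) := by rw [hrow, hyz]
      _ = x := gzCons_gzFirstRow_gzLowerRows x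

end Polytope

open Pointwise in
/-- The assignment `λ ↦ Δ_λ` is additive: for dominant integer weights `λ, μ`,
`Δ_{λ+μ} = Δ_λ + Δ_μ` (Minkowski sum). -/
theorem gzPolytope_add (n : ℕ) (hn : 2 ≤ n) (lam mu : Fin n → ℤ)
    (hlam : Monotone lam) (hmu : Monotone mu) :
    gzPolytope n (fun i => ((lam i + mu i : ℤ) : ℝ)) =
      gzPolytope n (fun i => (lam i : ℝ)) + gzPolytope n (fun i => (mu i : ℝ)) := by
  simp only [Int.cast_add]
  exact gzPolytope_add_general (Int.cast_mono.comp hlam) (Int.cast_mono.comp hmu)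
end

section
/- Let A = ⊕_{i=0}^n A^i be a graded commutative algebra over a field k with A^0 ≅ k and A^n ≅ k, and let I be the ideal of A generated by all homogeneous elements x ∈ A such that x · A^{n - deg(x)} = 0. Then I is a homogeneous ideal, the degree-n graded piece of I is zero (so (A/I)^n ≅ k and (A/I)^0 ≅ k), and the quotient graded algebra A/I has Poincaré duality. -/
/-- A graded algebra `A = ⊕_{i=0}^n A^i` (graded pieces `𝒜 i`) with `A^0 ≅ A^n ≅ k`
has Poincaré duality if for every `0 ≤ i ≤ n` the multiplication pairing
`A^i × A^{n-i} → A^n ≅ k` is non-degenerate. -/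
def PoincareDuality {k A : Type*} [Field k] [CommRing A] [Algebra k A]
    (𝒜 : ℕ → Submodule k A) (n : ℕ) : Prop :=
  ∀ i ≤ n,
    (∀ x ∈ 𝒜 i, x ≠ 0 → ∃ y ∈ 𝒜 (n - i), x * y ≠ 0) ∧
    (∀ y ∈ 𝒜 (n - i), y ≠ 0 → ∃ x ∈ 𝒜 i, x * y ≠ 0)

/-- The ideal generated by all homogeneous elements `x` (say of degree `i`)
with `x · A^{n - i} = 0`; the quotient by it is the Gorenstein quotient. -/
def gorIdeal {k A : Type*} [Field k] [CommRing A] [Algebra k A]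
    (𝒜 : ℕ → Submodule k A) (n : ℕ) : Ideal A :=
  Ideal.span {x | ∃ i ≤ n, x ∈ 𝒜 i ∧ ∀ y ∈ 𝒜 (n - i), x * y = 0}

/-!
For `x ∈ I` the degree-`n` component of `x * y` vanishes for every `y`: this is clear on the
generators of `I` and passes to the ideal they span. Hence `I` contains no other homogeneous
elements of degree `i ≤ n` than the evident ones, those with `x · A^{n-i} = 0`. For `i = n` this
gives `I ∩ A^n = 0`, so products landing in degree `n` are nonzero modulo `I` as soon as they are
nonzero in `A`, and nondegeneracy on `A/I` follows.
-/

theorem finrank_map_of_disjoint_ker {R M N : Type*} [Ring R] [AddCommGroup M] [AddCommGroup N]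
    [Module R M] [Module R N] {f : M →ₗ[R] N} {V : Submodule R M}
    (h : Disjoint V (LinearMap.ker f)) :
    Module.finrank R (V.map f) = Module.finrank R V := by
  rw [← LinearMap.range_domRestrict]
  exact LinearMap.finrank_range_of_inj (LinearMap.injective_domRestrict_iff.mpr h)

section

variable {k A : Type*} [Field k] [CommRing A] [Algebra k A]

theorem finrank_map_quotientMk_of_forall_mem_eq_zero {V : Submodule k A} {I : Ideal A}
    (h : ∀ x ∈ V, x ∈ I → x = 0) :
    Module.finrank k (V.map (Ideal.Quotient.mkₐ k I).toLinearMap) = Module.finrank k V :=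
  finrank_map_of_disjoint_ker <| LinearMap.disjoint_ker.mpr fun x hxV hx =>
    h x hxV (Ideal.Quotient.eq_zero_iff_mem.mp hx)

theorem poincareDuality_of_exists_mul_ne_zero {𝒜 : ℕ → Submodule k A} {n : ℕ}
    (h : ∀ i ≤ n, ∀ x ∈ 𝒜 i, x ≠ 0 → ∃ y ∈ 𝒜 (n - i), x * y ≠ 0) :
    PoincareDuality 𝒜 n := by
  refine fun i hi => ⟨h i hi, fun y hy hy0 => ?_⟩
  obtain ⟨x, hx, hyx⟩ := h (n - i) (Nat.sub_le n i) y hy hy0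
  rw [Nat.sub_sub_self hi] at hx
  exact ⟨x, hx, mul_comm y x ▸ hyx⟩

variable {𝒜 : ℕ → Submodule k A} {n i : ℕ} {x y : A}

theorem mul_mem_of_mem_of_mem_sub [SetLike.GradedMul 𝒜] (hi : i ≤ n) (hx : x ∈ 𝒜 i)
    (hy : y ∈ 𝒜 (n - i)) : x * y ∈ 𝒜 n :=
  Nat.add_sub_cancel' hi ▸ SetLike.mul_mem_graded hx hy

theorem eq_zero_of_mem_zero_of_forall_mul_eq_zero [SetLike.GradedMonoid 𝒜] {V : Submodule k A}
    (h0 : Module.finrank k (𝒜 0) = 1) (hV : V ≠ ⊥) (hx : x ∈ 𝒜 0) (hxV : ∀ y ∈ V, x * y = 0) :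
    x = 0 := by
  obtain ⟨y, hyV, hy⟩ := V.exists_mem_ne_zero_of_ne_bot hV
  have : Nontrivial A := nontrivial_of_ne y 0 hy
  have hbot : SetLike.GradeZero.subalgebra 𝒜 = ⊥ := Subalgebra.finrank_eq_one_iff.mp h0
  obtain ⟨c, rfl⟩ : ∃ c, algebraMap k A c = x := Algebra.mem_bot.mp (hbot ▸ hx)
  have hcy : c • y = 0 := by rw [Algebra.smul_def, hxV y hyV]
  rw [(smul_eq_zero.mp hcy).resolve_right hy, map_zero]

variable [GradedAlgebra 𝒜]

theorem gorIdeal_isHomogeneous : (gorIdeal 𝒜 n).IsHomogeneous 𝒜 :=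
  Ideal.homogeneous_span 𝒜 _ fun _ ⟨i, _, hx, _⟩ => ⟨i, hx⟩

theorem proj_mul_eq_zero_of_mem_gorIdeal (hx : x ∈ gorIdeal 𝒜 n) (y : A) :
    GradedAlgebra.proj 𝒜 n (x * y) = 0 := by
  induction hx using Submodule.span_induction generalizing y with
  | mem x hx =>
    obtain ⟨i, hi, hxi, hann⟩ := hx
    rw [GradedAlgebra.proj_apply, DirectSum.coe_decompose_mul_of_left_mem_of_le 𝒜 hxi hi]
    exact hann _ (SetLike.coe_mem _)
  | zero => rw [zero_mul, map_zero]
  | add x z _ _ hx hz => rw [add_mul, map_add, hx, hz, add_zero]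
  | smul a x _ hx => rw [smul_eq_mul, mul_comm a x, mul_assoc, hx]

theorem mem_gorIdeal_iff_of_mem (hi : i ≤ n) (hx : x ∈ 𝒜 i) :
    x ∈ gorIdeal 𝒜 n ↔ ∀ y ∈ 𝒜 (n - i), x * y = 0 := by
  refine ⟨fun hxI y hy => ?_, fun hann => Ideal.subset_span ⟨i, hi, hx, hann⟩⟩
  calc x * y = GradedAlgebra.proj 𝒜 n (x * y) :=
        (DirectSum.decompose_of_mem_same 𝒜 (mul_mem_of_mem_of_mem_sub hi hx hy)).symm
    _ = 0 := proj_mul_eq_zero_of_mem_gorIdeal hxI y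

theorem eq_zero_of_mem_gorIdeal_of_mem_top (hxI : x ∈ gorIdeal 𝒜 n) (hx : x ∈ 𝒜 n) : x = 0 := by
  have h1 : (1 : A) ∈ 𝒜 (n - n) := (Nat.sub_self n).symm ▸ SetLike.one_mem_graded 𝒜
  simpa only [mul_one] using (mem_gorIdeal_iff_of_mem le_rfl hx).mp hxI 1 h1

variable (𝒜 n)

theorem poincareDuality_quotient_gorIdeal :
    PoincareDuality
      (fun i => (𝒜 i).map (Ideal.Quotient.mkₐ k (gorIdeal 𝒜 n)).toLinearMap) n := by
  refine poincareDuality_of_exists_mul_ne_zero ?_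
  rintro i hi _ ⟨x, hx, rfl⟩ hx0
  have hxI : x ∉ gorIdeal 𝒜 n := fun h => hx0 (Ideal.Quotient.eq_zero_iff_mem.mpr h)
  obtain ⟨y, hy, hxy⟩ : ∃ y ∈ 𝒜 (n - i), x * y ≠ 0 := by
    simpa only [mem_gorIdeal_iff_of_mem hi hx, not_forall, exists_prop] using hxI
  have hxyI : x * y ∉ gorIdeal 𝒜 n := fun h =>
    hxy (eq_zero_of_mem_gorIdeal_of_mem_top h (mul_mem_of_mem_of_mem_sub hi hx hy))
  exact ⟨_, ⟨y, hy, rfl⟩, fun h => hxyI (Ideal.Quotient.eq_zero_iff_mem.mp h)⟩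

theorem gorenstein_quotient_has_poincare_duality_general
    (hfaithful : ∀ x ∈ 𝒜 0, (∀ y ∈ 𝒜 n, x * y = 0) → x = 0) :
    Ideal.IsHomogeneous 𝒜 (gorIdeal 𝒜 n) ∧
    (∀ x ∈ gorIdeal 𝒜 n, x ∈ 𝒜 n → x = 0) ∧
    Module.finrank k ((𝒜 0).map (Ideal.Quotient.mkₐ k (gorIdeal 𝒜 n)).toLinearMap) =
      Module.finrank k (𝒜 0) ∧
    Module.finrank k ((𝒜 n).map (Ideal.Quotient.mkₐ k (gorIdeal 𝒜 n)).toLinearMap) =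
      Module.finrank k (𝒜 n) ∧
    PoincareDuality
      (fun i => (𝒜 i).map (Ideal.Quotient.mkₐ k (gorIdeal 𝒜 n)).toLinearMap) n :=
  ⟨gorIdeal_isHomogeneous,
    fun _ => eq_zero_of_mem_gorIdeal_of_mem_top,
    finrank_map_quotientMk_of_forall_mem_eq_zero fun x hx hxI =>
      hfaithful x hx ((mem_gorIdeal_iff_of_mem n.zero_le hx).mp hxI),
    finrank_map_quotientMk_of_forall_mem_eq_zero fun _ hx hxI =>
      eq_zero_of_mem_gorIdeal_of_mem_top hxI hx,
    poincareDuality_quotient_gorIdeal 𝒜 n⟩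

end

/-- Let `A = ⊕_{i=0}^n A^i` be a graded commutative `k`-algebra with
`A^0 ≅ A^n ≅ k`, and `I` the ideal generated by all homogeneous `x` with
`x · A^{n - deg x} = 0`. Then `I` is homogeneous, its degree-`n` piece is zero,
`(A/I)^0 ≅ (A/I)^n ≅ k`, and `A/I` has Poincaré duality. -/
theorem gorenstein_quotient_has_poincare_duality
    {k A : Type*} [Field k] [CommRing A] [Algebra k A]
    (𝒜 : ℕ → Submodule k A) (n : ℕ) [GradedAlgebra 𝒜]
    (htop : ∀ i, n < i → 𝒜 i = ⊥)
    (h0 : Module.finrank k (𝒜 0) = 1)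
    (hn : Module.finrank k (𝒜 n) = 1) :
    Ideal.IsHomogeneous 𝒜 (gorIdeal 𝒜 n) ∧
    (∀ x ∈ gorIdeal 𝒜 n, x ∈ 𝒜 n → x = 0) ∧
    Module.finrank k
      ((𝒜 0).map (Ideal.Quotient.mkₐ k (gorIdeal 𝒜 n)).toLinearMap) = 1 ∧
    Module.finrank k
      ((𝒜 n).map (Ideal.Quotient.mkₐ k (gorIdeal 𝒜 n)).toLinearMap) = 1 ∧
    PoincareDuality
      (fun i => (𝒜 i).map (Ideal.Quotient.mkₐ k (gorIdeal 𝒜 n)).toLinearMap) n := by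
  have hne : 𝒜 n ≠ ⊥ :=
    (𝒜 n).nontrivial_iff_ne_bot.mp (Module.nontrivial_of_finrank_eq_succ hn)
  simpa only [h0, hn] using gorenstein_quotient_has_poincare_duality_general 𝒜 n
    fun _ => eq_zero_of_mem_zero_of_forall_mul_eq_zero h0 hne
end

section
/- Let A = ⊕_{i=0}^n A^i be a graded commutative algebra over a field k with A^0 ≅ k and A^n ≅ k, and let I be the ideal of A generated by all homogeneous elements x ∈ A such that x · A^{n - deg(x)} = 0. Then I is minimal among homogeneous ideals whose quotient has Poincaré duality: for every homogeneous ideal J of A such that A/J (with its induced grading) has Poincaré duality, one has I ⊆ J. -/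
theorem PoincareDuality.eq_zero_of_forall_mul_eq_zero
    {k A : Type*} [Field k] [CommRing A] [Algebra k A] {𝒜 : ℕ → Submodule k A} {n i : ℕ}
    (hPD : PoincareDuality 𝒜 n) (hi : i ≤ n) {x : A} (hx : x ∈ 𝒜 i)
    (hxy : ∀ y ∈ 𝒜 (n - i), x * y = 0) : x = 0 := by
  by_contra hx0
  obtain ⟨y, hy, hne⟩ := (hPD i hi).1 x hx hx0
  exact hne (hxy y hy)

theorem gorIdeal_minimal_general
    {k A B : Type*} [Field k] [CommRing A] [Algebra k A] [CommRing B] [Algebra k B]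
    (𝒜 : ℕ → Submodule k A) (n : ℕ) (f : A →ₐ[k] B)
    (hPD : PoincareDuality (fun i => (𝒜 i).map f.toLinearMap) n) :
    gorIdeal 𝒜 n ≤ RingHom.ker f := by
  refine Ideal.span_le.mpr ?_
  rintro x ⟨i, hi, hx, hxy⟩
  have hfxy : ∀ w ∈ (𝒜 (n - i)).map f.toLinearMap, f x * w = 0 := by
    rintro _ ⟨y, hy, rfl⟩
    rw [AlgHom.toLinearMap_apply, ← map_mul, hxy y hy, map_zero]
  exact hPD.eq_zero_of_forall_mul_eq_zero hi (Submodule.mem_map_of_mem hx) hfxy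

/-- The ideal `I = gorIdeal 𝒜 n` is minimal among homogeneous ideals whose quotient
has Poincaré duality: for every homogeneous ideal `J` with `A/J` (with its induced
grading) having Poincaré duality, `I ⊆ J`. -/
theorem gorIdeal_minimal
    {k A : Type*} [Field k] [CommRing A] [Algebra k A]
    (𝒜 : ℕ → Submodule k A) (n : ℕ) [GradedAlgebra 𝒜]
    (htop : ∀ i, n < i → 𝒜 i = ⊥)
    (h0 : Module.finrank k (𝒜 0) = 1)
    (hn : Module.finrank k (𝒜 n) = 1) :
    ∀ J : Ideal A, Ideal.IsHomogeneous 𝒜 J →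
      PoincareDuality (fun i => (𝒜 i).map (Ideal.Quotient.mkₐ k J).toLinearMap) n →
      gorIdeal 𝒜 n ≤ J := by
  intro J _ hPD
  exact (gorIdeal_minimal_general 𝒜 n (Ideal.Quotient.mkₐ k J) hPD).trans_eq
    (Ideal.Quotient.mkₐ_ker k J)
end

section
/- Let R be a commutative ring, let a_1, ..., a_r ∈ R, and let f ∈ R[t_1, ..., t_r] be a homogeneous polynomial of degree m with 0 ≤ m ≤ n. In the polynomial ring R[x_1, ..., x_r], applying the differential operator f(∂_1, ..., ∂_r) (obtained by substituting the formal partial derivative ∂_i = ∂/∂x_i for t_i in f) to the polynomial (x_1 a_1 + ... + x_r a_r)^n yields f(∂_1, ..., ∂_r) · (x_1 a_1 + ... + x_r a_r)^n = (n!/(n-m)!) · f(a_1, ..., a_r) · (x_1 a_1 + ... + x_r a_r)^{n-m}. In particular, when m = n the result is the constant n! · f(a_1, ..., a_r). -/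
open MvPolynomial

/-- For `f = Σ_β c_β t^β`, the differential operator `f(∂_1, …, ∂_r)` applied to `g`:
`Σ_β c_β ∂_1^{β_1} ⋯ ∂_r^{β_r} g`, where `∂_i` is the formal partial derivative
with respect to the `i`-th variable. -/
noncomputable def diffOp {R : Type*} [CommRing R] {r : ℕ}
    (f g : MvPolynomial (Fin r) R) : MvPolynomial (Fin r) R :=
  ∑ β ∈ f.support,
    MvPolynomial.coeff β f •
      (List.finRange r).foldr (fun i p => (fun q => MvPolynomial.pderiv i q)^[β i] p) g

/-!
For `ℓ = x_1 a_1 + ⋯ + x_r a_r`, the derivative `∂_i ℓ` is the constant `a_i`, so `∂_i` sends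
`ℓ ^ k` to `k a_i ℓ ^ (k - 1)`. Hence `∂^β (ℓ ^ n)` is `a^β ℓ ^ (n - |β|)` times a falling factorial
of `n` that depends only on `|β|`, and for homogeneous `f` this factor is the same for every
monomial.
-/

section Derivation

variable {R A : Type*} [CommSemiring R] [CommSemiring A] [Algebra R A]

theorem iterate_derivation_pow_of_apply_eq_algebraMap (D : Derivation R A A) {ℓ : A} {c : R}
    (hD : D ℓ = algebraMap R A c) (n k : ℕ) :
    D^[k] (ℓ ^ n) = (n.descFactorial k * c ^ k) • ℓ ^ (n - k) := by
  induction k with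
  | zero => simp
  | succ k ih =>
    have hstep : D (ℓ ^ (n - k)) = ((n - k : ℕ) * c) • ℓ ^ (n - (k + 1)) := by
      rw [D.leibniz_pow, hD, Nat.sub_sub, smul_eq_mul, mul_comm, ← Algebra.smul_def, mul_smul,
        Nat.cast_smul_eq_nsmul]
    rw [Function.iterate_succ_apply', ih, D.map_smul, hstep, smul_smul, Nat.descFactorial_succ]
    congr 1
    push_cast
    ring

theorem iterate_derivation_smul (D : Derivation R A A) (k : ℕ) (s : R) (x : A) :
    D^[k] (s • x) = s • D^[k] x :=
  have hcomm : Function.Commute D (s • ·) := D.map_smul s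
  hcomm.iterate_left k x

theorem foldr_iterate_derivation_pow_of_apply_eq_algebraMap {ι : Type*} (D : ι → Derivation R A A)
    {ℓ : A} {a : ι → R} (hD : ∀ i, D i ℓ = algebraMap R A (a i)) (β : ι → ℕ) (n : ℕ)
    (l : List ι) :
    l.foldr (fun i p => (D i)^[β i] p) (ℓ ^ n) =
      (n.descFactorial (l.map β).sum * (l.map fun i => a i ^ β i).prod) •
        ℓ ^ (n - (l.map β).sum) := by
  induction l with
  | nil => simp
  | cons i l ih =>
    simp only [List.foldr_cons, List.map_cons, List.sum_cons, List.prod_cons]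
    have hdesc : n.descFactorial (β i + (l.map β).sum) =
        (n - (l.map β).sum).descFactorial (β i) * n.descFactorial (l.map β).sum := by
      simpa using (Nat.descFactorial_mul_descFactorial (n := n)
        (Nat.le_add_left (l.map β).sum (β i))).symm
    rw [ih, iterate_derivation_smul, iterate_derivation_pow_of_apply_eq_algebraMap (D i) (hD i),
      smul_smul, hdesc, Nat.sub_sub, add_comm (β i)]
    congr 1
    push_cast
    ring

end Derivation

theorem pderiv_sum_C_mul_X {R σ : Type*} [CommSemiring R] [Fintype σ] (a : σ → R) (i : σ) :
    pderiv i (∑ j, C (a j) * X j) = C (a i) := by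
  classical
  simp [pderiv_X, Pi.single_apply]

theorem diffOp_homogeneous_apply_pow_linear_general {R : Type*} [CommRing R] {r : ℕ}
    (n m : ℕ) {a : Fin r → R} {ℓ : MvPolynomial (Fin r) R} (hℓ : ∀ i, pderiv i ℓ = C (a i))
    {f : MvPolynomial (Fin r) R} (hf : f.IsHomogeneous m) :
    diffOp f (ℓ ^ n) = n.descFactorial m • (C (eval a f) * ℓ ^ (n - m)) := by
  rw [diffOp, eval_eq', map_sum, Finset.sum_mul, Finset.smul_sum]
  refine Finset.sum_congr rfl fun β hβ => ?_
  have hdegree : ((List.finRange r).map β).sum = m := by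
    rw [← Fin.sum_univ_def, ← Finsupp.degree_eq_sum, Finsupp.degree_eq_weight_one]
    exact hf (mem_support_iff.mp hβ)
  rw [foldr_iterate_derivation_pow_of_apply_eq_algebraMap pderiv hℓ, hdegree, ← Fin.prod_univ_def,
    ← smul_eq_C_mul, smul_smul, ← Nat.cast_smul_eq_nsmul R, smul_smul, mul_left_comm]

/-- Applying `f(∂_1, …, ∂_r)` for a homogeneous polynomial `f` of degree `m ≤ n` to
`(x_1 a_1 + ⋯ + x_r a_r)^n` yields
`(n!/(n-m)!) · f(a_1, …, a_r) · (x_1 a_1 + ⋯ + x_r a_r)^{n-m}`. -/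
theorem diffOp_homogeneous_apply_pow_linear {R : Type*} [CommRing R] {r : ℕ}
    (n m : ℕ) (hm : m ≤ n) (a : Fin r → R)
    (f : MvPolynomial (Fin r) R) (hf : f.IsHomogeneous m) :
    diffOp f ((∑ i, MvPolynomial.C (a i) * MvPolynomial.X i) ^ n) =
      (n.factorial / (n - m).factorial) •
        (MvPolynomial.C (MvPolynomial.eval a f) *
          (∑ i, MvPolynomial.C (a i) * MvPolynomial.X i) ^ (n - m)) := by
  rw [← Nat.descFactorial_eq_div hm]
  exact diffOp_homogeneous_apply_pow_linear_general n m (pderiv_sum_C_mul_X a) hf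
end

section
/- Let v_1, ..., v_8 ∈ ℤ^3 be the eight vectors (±1, ±1, ±1). Call indices i, j adjacent if v_i and v_j differ in exactly one coordinate (so the adjacent pairs are exactly the 12 edges of the cube, and each index i has exactly 3 adjacent indices). Suppose c assigns an integer c_{ij} = c_{ji} to each adjacent pair {i, j}, and suppose c satisfies the following balancing condition: for every index i and every u ∈ ℤ^3 with ⟨u, v_i⟩ = 0, one has Σ_{j adjacent to i} ⟨u, v_j⟩ c_{ij} = 0. Then c is constant: all twelve values c_{ij} are equal. (Hence the group of such c is free abelian of rank 1.) -/
/-- The eight vectors `(±1, ±1, ±1)` in `ℤ^3`: the vertices of the cube. -/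
def cubeVert : Fin 8 → (Fin 3 → ℤ) :=
  ![![1, 1, 1], ![1, 1, -1], ![1, -1, 1], ![-1, 1, 1],
    ![-1, -1, -1], ![-1, -1, 1], ![-1, 1, -1], ![1, -1, -1]]

/-- Indices `i, j` are adjacent if `v_i` and `v_j` differ in exactly one coordinate
(the adjacent pairs are exactly the 12 edges of the cube). -/
abbrev CubeAdj (i j : Fin 8) : Prop :=
  (Finset.univ.filter fun t : Fin 3 => cubeVert i t ≠ cubeVert j t).card = 1

/-!
At a vertex `x` of the cube, the neighbour across coordinate `t` is `x - 2 x_t e_t`, so for `u ⊥ x`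
it contributes `-2 u_t x_t` to the balancing sum. Testing with `u = x_s e_s - x_t e_t` shows that
the edges at `x` in directions `s` and `t` carry the same weight. So all edges at a vertex have
equal weight, and connectedness of the cube graph spreads this value to every edge.
-/

open scoped Matrix

section Hamming

variable {ι : Type*} [Fintype ι] [DecidableEq ι] {β : ι → Type*} [∀ t, DecidableEq (β t)]

lemma hammingDist_eq_one_iff_exists_update {x y : ∀ t, β t} :
    hammingDist x y = 1 ↔ ∃ t, ∃ a ≠ x t, y = Function.update x t a := by
  simp only [hammingDist, Finset.card_eq_one, Finset.ext_iff, Finset.mem_filter_univ,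
    Finset.mem_singleton]
  constructor
  · rintro ⟨t, ht⟩
    refine ⟨t, y t, ((ht t).2 rfl).symm, Function.eq_update_iff.2 ⟨rfl, fun r hr => ?_⟩⟩
    exact (not_not.1 (mt (ht r).1 hr)).symm
  · rintro ⟨t, a, ha, rfl⟩
    refine ⟨t, fun r => ?_⟩
    obtain rfl | hr := eq_or_ne r t
    · simpa using ha.symm
    · simp [hr]

lemma hammingDist_update_lt {x y : ∀ t, β t} {t : ι} (ht : x t ≠ y t) :
    hammingDist (Function.update x t (y t)) y < hammingDist x y := by
  refine Finset.card_lt_card ((Finset.ssubset_iff_of_subset fun r => ?_).2 ⟨t, by simpa, by simp⟩)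
  obtain rfl | hr := eq_or_ne r t <;> simp [*]

end Hamming

section HammingGraph

variable {V ι : Type*} [Fintype ι] {β : ι → Type*} [∀ t, DecidableEq (β t)]

/-- The graph on the labels `V` of the vectors `v i` whose edges join labels of vectors differing
in exactly one coordinate. When `v` enumerates the vertices of a cube, this is its edge graph. -/
def hammingGraph (v : V → ∀ t, β t) : SimpleGraph V where
  Adj i j := hammingDist (v i) (v j) = 1
  symm := ⟨fun i j hij => (hammingDist_comm (v j) (v i)).trans hij⟩
  loopless := ⟨fun i => by simp⟩

instance (v : V → ∀ t, β t) : DecidableRel (hammingGraph v).Adj :=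
  fun i j => inferInstanceAs (Decidable (hammingDist (v i) (v j) = 1))

lemma hammingGraph_preconnected {v : V → ∀ t, β t} (hv : Function.Injective v)
    {s : ∀ t, Set (β t)} (hrange : Set.range v = Set.univ.pi s) :
    (hammingGraph v).Preconnected := by
  classical
  intro i k
  induction h : hammingDist (v i) (v k) using Nat.strong_induction_on generalizing i with
  | _ n ih =>
    obtain hik | hik := eq_or_ne (v i) (v k)
    · exact hv hik ▸ .rfl
    · have hmem : ∀ l t, v l t ∈ s t := fun l t =>
        hrange.subset (Set.mem_range_self l) t (Set.mem_univ t)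
      obtain ⟨t, ht⟩ := Function.ne_iff.1 hik
      obtain ⟨j, hj⟩ : Function.update (v i) t (v k t) ∈ Set.range v := by
        rw [hrange, Set.update_mem_pi_iff_of_mem fun r _ => hmem i r]
        exact fun _ => hmem k t
      have hadj : (hammingGraph v).Adj i j :=
        hammingDist_eq_one_iff_exists_update.2 ⟨t, v k t, ht.symm, hj⟩
      have hlt : hammingDist (v j) (v k) < n := by
        rw [hj, ← h]
        exact hammingDist_update_lt ht
      exact hadj.reachable.trans (ih _ hlt j rfl)

end HammingGraph

lemma edgeWeight_eq_of_preconnected {V α : Type*} {G : SimpleGraph V} (hG : G.Preconnected)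
    {c : V → V → α} (hsymm : ∀ i j, G.Adj i j → c i j = c j i)
    (hstar : ∀ i j k, G.Adj i j → G.Adj i k → c i j = c i k) {i j i' j' : V}
    (hij : G.Adj i j) (hij' : G.Adj i' j') : c i j = c i' j' := by
  obtain ⟨p⟩ := hG i i'
  induction p generalizing j with
  | nil => exact hstar _ _ _ hij hij'
  | @cons i k i' hik _ ih =>
    calc c i j = c i k := hstar i j k hij hik
      _ = c k i := hsymm i k hik
      _ = c i' j' := ih hik.symm hij'

lemma dotProduct_update_neg {ι R : Type*} [Fintype ι] [DecidableEq ι] [CommRing R]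
    (u x : ι → R) (t : ι) :
    u ⬝ᵥ Function.update x t (-x t) = u ⬝ᵥ x - 2 * (u t * x t) := by
  have hupdate : Function.update x t (-x t) = x - Pi.single t (2 * x t) := by
    ext r
    obtain rfl | hr := eq_or_ne r t
    · simp only [Function.update_self, Pi.sub_apply, Pi.single_eq_same]
      ring
    · simp [hr]
  rw [hupdate, dotProduct_sub, dotProduct_single]
  ring

/-- `v` labels the vertices of the cube `[-1, 1]^ι`, each exactly once. -/
structure IsCubeLabelling {V ι : Type*} (v : V → ι → ℤ) : Prop where
  injective : Function.Injective v
  range_eq : Set.range v = Set.univ.pi fun _ => {1, -1}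

/-- The balancing condition at every ray of the fan over the points `v i`, for a weight `c` on the
two-dimensional cones spanned by pairs adjacent in `hammingGraph v`. The values of `c` on
non-adjacent pairs are irrelevant. -/
def IsBalanced {V ι M : Type*} [Fintype V] [Fintype ι] [AddCommGroup M] (v : V → ι → ℤ)
    (c : V → V → M) : Prop :=
  ∀ i u, u ⬝ᵥ v i = 0 → ∑ j with (hammingGraph v).Adj i j, (u ⬝ᵥ v j) • c i j = 0

namespace IsCubeLabelling

variable {V ι : Type*} {v : V → ι → ℤ}

lemma apply_eq_one_or_neg_one (hv : IsCubeLabelling v) (i : V) (t : ι) : v i t = 1 ∨ v i t = -1 :=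
  hv.range_eq.subset (Set.mem_range_self i) t (Set.mem_univ t)

lemma apply_mul_self (hv : IsCubeLabelling v) (i : V) (t : ι) : v i t * v i t = 1 := by
  obtain h | h := hv.apply_eq_one_or_neg_one i t <;> simp [h]

variable [DecidableEq ι]

lemma exists_eq_update_neg (hv : IsCubeLabelling v) (i : V) (t : ι) :
    ∃ j, v j = Function.update (v i) t (-v i t) := by
  change _ ∈ Set.range v
  have hmem : v i ∈ Set.univ.pi fun _ => ({1, -1} : Set ℤ) := hv.range_eq ▸ Set.mem_range_self i
  rw [hv.range_eq, Set.update_mem_pi_iff_of_mem hmem]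
  obtain h | h := hv.apply_eq_one_or_neg_one i t <;> simp [h]

/-- The label of the neighbour of the vertex `v i` across coordinate `t`. -/
noncomputable def neighbor (hv : IsCubeLabelling v) (i : V) (t : ι) : V :=
  (hv.exists_eq_update_neg i t).choose

lemma apply_neighbor (hv : IsCubeLabelling v) (i : V) (t : ι) :
    v (hv.neighbor i t) = Function.update (v i) t (-v i t) :=
  (hv.exists_eq_update_neg i t).choose_spec

lemma neighbor_injective (hv : IsCubeLabelling v) (i : V) : Function.Injective (hv.neighbor i) := by
  intro s t hst
  by_contra hne
  have hflip : -v i s = v i s := by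
    simpa [hv.apply_neighbor, hne] using congrFun (congrArg v hst) s
  obtain h | h := hv.apply_eq_one_or_neg_one i s <;> simp [h] at hflip

variable [Fintype ι]

lemma adj_iff_exists_neighbor_eq (hv : IsCubeLabelling v) {i j : V} :
    (hammingGraph v).Adj i j ↔ ∃ t, hv.neighbor i t = j := by
  refine hammingDist_eq_one_iff_exists_update.trans (exists_congr fun t => ?_)
  rw [← hv.injective.eq_iff, hv.apply_neighbor]
  have hunit := hv.apply_eq_one_or_neg_one i t
  constructor
  · rintro ⟨a, ha, hj⟩
    have hunit' := hv.apply_eq_one_or_neg_one j t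
    rw [hj, Function.update_self] at hunit'
    obtain rfl : a = -v i t := by lia
    exact hj.symm
  · intro hj
    exact ⟨-v i t, by lia, hj.symm⟩

variable [Fintype V]

lemma sum_adj_eq_sum_neighbor {A : Type*} [AddCommMonoid A] (hv : IsCubeLabelling v) (i : V)
    (f : V → A) :
    ∑ j with (hammingGraph v).Adj i j, f j = ∑ t, f (hv.neighbor i t) := by
  classical
  have himage : Finset.univ.filter ((hammingGraph v).Adj i) =
      Finset.univ.image (hv.neighbor i) := by
    ext j
    simp [hv.adj_iff_exists_neighbor_eq]
  rw [himage, Finset.sum_image (hv.neighbor_injective i).injOn]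

variable {M : Type*} [AddCommGroup M] {c : V → V → M}

lemma sum_smul_neighbor_eq_zero (hv : IsCubeLabelling v) (hM : IsSMulRegular M (2 : ℤ))
    (hbal : IsBalanced v c) (i : V) {u : ι → ℤ} (hu : u ⬝ᵥ v i = 0) :
    ∑ t, (u t * v i t) • c i (hv.neighbor i t) = 0 := by
  refine hM.right_eq_zero_of_smul (neg_eq_zero.1 ?_)
  have hsum := hbal i u hu
  rw [hv.sum_adj_eq_sum_neighbor] at hsum
  simpa only [hv.apply_neighbor, dotProduct_update_neg, hu, zero_sub, neg_smul, mul_smul,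
    Finset.sum_neg_distrib, ← Finset.smul_sum] using hsum

lemma weight_neighbor_eq (hv : IsCubeLabelling v) (hM : IsSMulRegular M (2 : ℤ))
    (hbal : IsBalanced v c) (i : V) (s t : ι) :
    c i (hv.neighbor i s) = c i (hv.neighbor i t) := by
  have horth : (Pi.single s (v i s) - Pi.single t (v i t)) ⬝ᵥ v i = 0 := by
    simp [sub_dotProduct, hv.apply_mul_self]
  have hsum := hv.sum_smul_neighbor_eq_zero hM hbal i horth
  simpa [sub_mul, sub_smul, Pi.single_apply, ite_mul, ite_smul, hv.apply_mul_self,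
    sub_eq_zero] using hsum

end IsCubeLabelling

theorem cube_fan_codim_one_minkowski_weights_constant_general {V ι M : Type*} [Fintype V]
    [Fintype ι] [AddCommGroup M] (hM : IsSMulRegular M (2 : ℤ)) {v : V → ι → ℤ}
    (hv : IsCubeLabelling v) {c : V → V → M}
    (hsymm : ∀ i j, (hammingGraph v).Adj i j → c i j = c j i) (hbal : IsBalanced v c)
    {i j i' j' : V} (hij : (hammingGraph v).Adj i j) (hij' : (hammingGraph v).Adj i' j') :
    c i j = c i' j' := by
  classical
  refine edgeWeight_eq_of_preconnected (hammingGraph_preconnected hv.injective hv.range_eq) hsymm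
    (fun i j k hij hik => ?_) hij hij'
  obtain ⟨s, rfl⟩ := hv.adj_iff_exists_neighbor_eq.1 hij
  obtain ⟨t, rfl⟩ := hv.adj_iff_exists_neighbor_eq.1 hik
  exact hv.weight_neighbor_eq hM hbal i s t

lemma isCubeLabelling_cubeVert : IsCubeLabelling cubeVert where
  injective := by decide
  range_eq := by
    have himage : Finset.univ.image cubeVert = Fintype.piFinset fun _ => {1, -1} := by decide
    simpa using congrArg (fun s : Finset (Fin 3 → ℤ) => (s : Set (Fin 3 → ℤ))) himage

/-- A codimension-1 Minkowski weight on the fan over the cube is constant: if `c`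
assigns an integer `c i j = c j i` to each adjacent pair `{i, j}` and satisfies the
balancing condition `Σ_{j adj i} ⟨u, v_j⟩ c i j = 0` for every `i` and every
`u ∈ ℤ^3` with `⟨u, v_i⟩ = 0`, then all twelve values are equal. -/
theorem cube_fan_codim_one_minkowski_weights_constant
    (c : Fin 8 → Fin 8 → ℤ)
    (hsymm : ∀ i j, CubeAdj i j → c i j = c j i)
    (hbal : ∀ (i : Fin 8) (u : Fin 3 → ℤ), (∑ t, u t * cubeVert i t = 0) →
      ∑ j ∈ Finset.univ.filter (fun j => CubeAdj i j),
        (∑ t, u t * cubeVert j t) * c i j = 0) :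
    ∀ i j i' j', CubeAdj i j → CubeAdj i' j' → c i j = c i' j' :=
  fun _ _ _ _ => cube_fan_codim_one_minkowski_weights_constant_general
    (IsRegular.of_ne_zero two_ne_zero).left.isSMulRegular isCubeLabelling_cubeVert hsymm hbal
end
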